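/- arXiv:1501.01202 — 3 statements merged into one kernel-verified Lean document; each statement's English description precedes it below -/
import Mathlib

section
/- Let 0 < α < 1 and let ESP = (α, p) be the exponential smoothing model with fixed smoothing rate αₖ = α for all k, satisfying Assumption A. Let x_{1:n} be a bit sequence of length n ≥ 1 and S a partition of the integer interval (0, n]. Then ℓ(x_{1:n}; ESP) − ∑_{(a,b]∈S} h(x_{a+1:b}) ≤ |S|·[ log₂(1/p(0)) + (π·log₂ e)²/(6·log₂(1/α)) + (n−1)·log₂(1/α) ]. -/
/-!
Code length and entropy are both additive over the segments of the partition, so it suffices to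
bound the redundancy on one segment `(A, B]` of length `N = B - A`. There the model is exponential
smoothing started at a distribution `q` with `q 0 + q 1 = 1` and `q y ≥ a ^ A * p false =: ε`
(`ES.espP_eq`, `ES.le_espP`). Write `c = log (1 / a)` and work in nats.

The comparator is the starting distribution `v` for which smoothing the segment returns to `v` after
`N` steps. Following the logarithm of the probability of the letter `y` around one period, its
increments sum to zero; a letter different from `y` contributes `-c`, and Jensen's inequality for
`log`, with weights chosen to be exact for equally spaced occurrences, bounds the increment at an
occurrence of `y` (`ES.periodic_bound`). Summed over both letters, the loss of the comparator is at
most the empirical entropy plus `c * N`.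

Passing from `v` to `q` changes the probability of the first occurrence of `y` by the factor
`q y / v y`. Later occurrences only improve if `v y ≤ q y`; in any case the occurrence after `r`
others loses at most the factor `1 - a ^ r` (`ES.start_bound`), and
`∑ r ≥ 1, -log (1 - a ^ r) ≤ π² / (6 c)` (`ES.sum_neg_log_le`). Since `v` and `q` both sum to one,
this loss occurs for at most one letter. If both letters occur, then
`v 0 * v 1 / (q 0 * q 1) ≤ 1 / (2 ε) ≤ a / ε`, so the first occurrences cost `log (1 / ε) - c`, and
the segment total is `log (1 / ε) + π² / (6 c) + (N - 1) c`; a constant segment is easier. Finally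
`log (1 / ε) = log (1 / p false) + A c` and `A + N - 1 = B - 1 ≤ n - 1`.
-/

open Finset Real

/-- The exponential smoothing model's prediction: `espP α p x k y` is the probability
assigned to bit `y` after observing `x 1, …, x k` (bits are `Bool`, `1 ↦ true`). -/
noncomputable def espP (α : ℕ → ℝ) (p : Bool → ℝ) (x : ℕ → Bool) : ℕ → Bool → ℝ
  | 0, y => p y
  | k + 1, y =>
      if y = x (k + 1) then α (k + 1) * espP α p x k y + (1 - α (k + 1))
      else α (k + 1) * espP α p x k y

/-- Ideal code length assigned by the model to the letters `x (a+1), …, x b`. -/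
noncomputable def codeLen (α : ℕ → ℝ) (p : Bool → ℝ) (x : ℕ → Bool) (a b : ℕ) : ℝ :=
  ∑ i ∈ Finset.Ico a b, -Real.logb 2 (espP α p x i (x (i + 1)))

/-- `beta α i = α 1 * ⋯ * α i`, with `beta α 0 = 1`. -/
noncomputable def beta (α : ℕ → ℝ) (i : ℕ) : ℝ := ∏ k ∈ Finset.Icc 1 i, α k

/-- Binary entropy function (base-2); `Real.logb 2 0 = 0` handles the `0 log 0 = 0` convention. -/
noncomputable def binEnt (q : ℝ) : ℝ := -q * Real.logb 2 q - (1 - q) * Real.logb 2 (1 - q)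

/-- Empirical entropy of the subsequence `x (a+1), …, x b`. -/
noncomputable def empEnt (x : ℕ → Bool) (a b : ℕ) : ℝ :=
  ((b : ℝ) - a) *
    binEnt ((((Finset.Icc (a + 1) b).filter (fun i => x i = true)).card : ℝ) / ((b : ℝ) - a))

/-- `S` is a partition of the integer interval `(0, n]` into segments `(a, b]`
(represented by pairs `(a, b)`): every point of `(0, n]` lies in exactly one segment. -/
def IsPartition (S : Finset (ℕ × ℕ)) (n : ℕ) : Prop :=
  (∀ s ∈ S, s.1 < s.2 ∧ s.2 ≤ n) ∧
    ∀ i, 1 ≤ i → i ≤ n → ∃! s, s ∈ S ∧ s.1 < i ∧ i ≤ s.2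

namespace ES

/-! ### Exponential smoothing as a linear recursion -/

/-- The part of the smoothed estimate of letter `y` that comes from the observed letters
`e 0, …, e (k - 1)` alone: the state after `k` steps of exponential smoothing with rate `a` started
at `0`. Started at `v`, the state is `tail a e y k + a ^ k * v`. -/
noncomputable def tail (a : ℝ) (e : ℕ → Bool) (y : Bool) : ℕ → ℝ
  | 0 => 0
  | k + 1 => a * tail a e y k + if e k = y then 1 - a else 0

/-- The number of occurrences of the letter `y` among `e 0, …, e (k - 1)`. -/
def cnt (e : ℕ → Bool) (y : Bool) (k : ℕ) : ℕ := ((range k).filter (fun i => e i = y)).card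

lemma cnt_zero (e : ℕ → Bool) (y : Bool) : cnt e y 0 = 0 := by simp [cnt]

lemma cnt_succ (e : ℕ → Bool) (y : Bool) (k : ℕ) :
    cnt e y (k + 1) = cnt e y k + if e k = y then 1 else 0 := by
  unfold cnt
  rw [Finset.range_add_one, Finset.filter_insert]
  split_ifs <;> simp

lemma cnt_le (e : ℕ → Bool) (y : Bool) (k : ℕ) : cnt e y k ≤ k := by
  simpa [cnt] using Finset.card_filter_le (range k) (fun i => e i = y)

lemma cnt_add (e : ℕ → Bool) (k : ℕ) : cnt e false k + cnt e true k = k := by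
  induction k with
  | zero => simp [cnt_zero]
  | succ k ih => rw [cnt_succ, cnt_succ]; cases e k <;> simp <;> omega

lemma tail_nonneg {a : ℝ} (ha0 : 0 < a) (ha1 : a < 1) (e : ℕ → Bool) (y : Bool) (k : ℕ) :
    0 ≤ tail a e y k := by
  induction k with
  | zero => exact le_rfl
  | succ k ih => rw [tail]; split_ifs <;> nlinarith [mul_nonneg ha0.le ih]

lemma tail_add (a : ℝ) (e : ℕ → Bool) (k : ℕ) :
    tail a e false k + tail a e true k = 1 - a ^ k := by
  induction k with
  | zero => simp [tail]
  | succ k ih =>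
    have h : tail a e false (k + 1) + tail a e true (k + 1)
        = a * (tail a e false k + tail a e true k) + (1 - a) := by
      rw [tail, tail]; cases e k <;> simp <;> ring
    rw [h, ih]; ring

lemma tail_eq_zero (a : ℝ) (e : ℕ → Bool) (y : Bool) (k : ℕ) (h : cnt e y k = 0) :
    tail a e y k = 0 := by
  induction k with
  | zero => rfl
  | succ k ih =>
    rw [cnt_succ] at h
    have h2 : ¬ e k = y := by intro h'; simp [h'] at h
    simp [tail, h2, ih (by omega)]

/-- With `r` occurrences of `y` among the first `k` letters, the observed part is smallest when they
all come first, where it equals `a ^ (k - r) * (1 - a ^ r)`. -/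
lemma le_tail {a : ℝ} (ha0 : 0 < a) (ha1 : a < 1) (e : ℕ → Bool) (y : Bool) (k : ℕ) :
    a ^ k * (1 - a ^ cnt e y k) ≤ a ^ cnt e y k * tail a e y k := by
  induction k with
  | zero => simp [cnt_zero, tail]
  | succ k ih =>
    rw [cnt_succ, tail]
    split_ifs with h
    · have h1 : a ^ k ≤ a ^ cnt e y k :=
        pow_le_pow_of_le_one ha0.le ha1.le (cnt_le e y k)
      have h2 := mul_le_mul_of_nonneg_left ih (mul_pos ha0 ha0).le
      have h3 := mul_le_mul_of_nonneg_left h1 (mul_pos ha0 (sub_pos.2 ha1)).le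
      rw [pow_succ, pow_succ]
      nlinarith
    · have h2 := mul_le_mul_of_nonneg_left ih ha0.le
      rw [add_zero, add_zero, pow_succ]
      nlinarith

/-- The model after `A + k` letters, seen as smoothing of the last `k` letters started at the
model's state after `A` letters. -/
lemma espP_eq (a : ℝ) (p : Bool → ℝ) (x : ℕ → Bool) (A k : ℕ) (y : Bool) :
    espP (fun _ => a) p x (A + k) y =
      tail a (fun i => x (A + i + 1)) y k + a ^ k * espP (fun _ => a) p x A y := by
  induction k with
  | zero => simp [tail]
  | succ k ih =>
    rw [← add_assoc, espP, ih, tail]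
    by_cases h : x (A + k + 1) = y
    · simp [h]; ring
    · simp [h, Ne.symm h]; ring

lemma espP_add (a : ℝ) {p : Bool → ℝ} (hp : p false + p true = 1) (x : ℕ → Bool) (A : ℕ) :
    espP (fun _ => a) p x A false + espP (fun _ => a) p x A true = 1 := by
  have h0 := espP_eq a p x 0 A false
  have h1 := espP_eq a p x 0 A true
  rw [zero_add] at h0 h1
  rw [h0, h1]
  have := tail_add a (fun i => x (0 + i + 1)) A
  simp only [espP]
  linear_combination this + a ^ A * hp

lemma le_espP {a : ℝ} (ha0 : 0 < a) (ha1 : a < 1) {p : Bool → ℝ} (hple : p false ≤ p true)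
    (x : ℕ → Bool) (A : ℕ) (y : Bool) :
    a ^ A * p false ≤ espP (fun _ => a) p x A y := by
  have h0 := espP_eq a p x 0 A y
  rw [zero_add] at h0
  rw [h0]
  have h1 := tail_nonneg ha0 ha1 (fun i => x (0 + i + 1)) y A
  have h2 : p false ≤ p y := by cases y <;> simp [hple]
  have := mul_le_mul_of_nonneg_left h2 (pow_pos ha0 A).le
  simp only [espP]
  linarith

/-! ### Losses on the occurrences of one letter -/

/-- Expand each logarithm in its power series, sum the geometric series in `i`, and use
`β / (1 - β) ≤ 1 / log (1 / β)` for `β = a ^ (j + 1)`; what is left is `ζ(2) = π² / 6`. -/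
lemma sum_neg_log_le {a : ℝ} (ha0 : 0 < a) (ha1 : a < 1) (M : ℕ) :
    ∑ i ∈ range M, -Real.log (1 - a ^ (i + 1)) ≤ π ^ 2 / 6 / (-Real.log a) := by
  have hc : 0 < -Real.log a := by have := Real.log_neg ha0 ha1; linarith
  have h1 : HasSum (fun j : ℕ => ∑ i ∈ range M, (a ^ (i + 1)) ^ (j + 1) / ((j : ℝ) + 1))
      (∑ i ∈ range M, -Real.log (1 - a ^ (i + 1))) := by
    apply hasSum_sum
    intro i _
    apply Real.hasSum_pow_div_log_of_abs_lt_one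
    rw [abs_of_pos (pow_pos ha0 _)]
    exact pow_lt_one₀ ha0.le ha1 (by omega)
  have h2 : HasSum (fun j : ℕ => 1 / ((j : ℝ) + 1) ^ 2 / (-Real.log a))
      (π ^ 2 / 6 / (-Real.log a)) := by
    apply HasSum.div_const
    have := (hasSum_nat_add_iff' 1).2 hasSum_zeta_two
    simpa using this
  refine hasSum_le (fun j => ?_) h1 h2
  set β := a ^ (j + 1) with hβ
  have hβ0 : 0 < β := pow_pos ha0 _
  have hβ1 : β < 1 := pow_lt_one₀ ha0.le ha1 (by omega)
  have hj : (0 : ℝ) < (j : ℝ) + 1 := by positivity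
  have e1 : ∑ i ∈ range M, (a ^ (i + 1)) ^ (j + 1) / ((j : ℝ) + 1)
      = β * (∑ i ∈ range M, β ^ i) / ((j : ℝ) + 1) := by
    rw [Finset.mul_sum, Finset.sum_div]
    refine Finset.sum_congr rfl (fun i _ => ?_)
    rw [hβ]; ring
  have e2 : ∑ i ∈ range M, β ^ i ≤ (1 - β)⁻¹ := by
    have hs := summable_geometric_of_lt_one hβ0.le hβ1
    rw [← tsum_geometric_of_lt_one hβ0.le hβ1]
    exact hs.sum_le_tsum _ (fun i _ => (pow_pos hβ0 i).le)
  have e3 : ((j : ℝ) + 1) * (-Real.log a) * β ≤ 1 - β := by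
    have h := Real.log_le_sub_one_of_pos (inv_pos.2 hβ0)
    have hl : Real.log β⁻¹ = ((j : ℝ) + 1) * (-Real.log a) := by
      rw [Real.log_inv, hβ, Real.log_pow]; push_cast; ring
    rw [hl] at h
    have := mul_le_mul_of_nonneg_right h hβ0.le
    rwa [sub_mul, inv_mul_cancel₀ hβ0.ne', one_mul] at this
  have h1β : 0 < 1 - β := by linarith
  have e4 : β * (1 - β)⁻¹ ≤ 1 / (((j : ℝ) + 1) * (-Real.log a)) := by
    rw [← div_eq_mul_inv, div_le_div_iff₀ h1β (by positivity)]
    linarith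
  rw [e1]
  calc β * (∑ i ∈ range M, β ^ i) / ((j : ℝ) + 1)
      ≤ (1 / (((j : ℝ) + 1) * (-Real.log a))) / ((j : ℝ) + 1) := by
        gcongr
        exact (mul_le_mul_of_nonneg_left e2 hβ0.le).trans e4
    _ = _ := by field_simp

/-- Loss of the periodic orbit on the letter `y`: if smoothing started at `v` returns to `v` after
`N` steps, then predicting the occurrences of `y` costs at most their share of the empirical entropy
plus `log (1 / a)` for every other letter. The increments of the logarithm of the state sum to zero
over a period, and concavity of `log` bounds each of them from below. -/
lemma periodic_bound {a : ℝ} (ha0 : 0 < a) (ha1 : a < 1) (e : ℕ → Bool) (y : Bool) {N : ℕ}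
    {v : ℝ} (hv : 0 < v) (hper : tail a e y N + a ^ N * v = v) (hm : 0 < cnt e y N) :
    (cnt e y N : ℝ) * Real.log (cnt e y N / N) + Real.log a * ((N : ℝ) - cnt e y N) ≤
      ∑ k ∈ range N, if e k = y then Real.log (tail a e y k + a ^ k * v) else 0 := by
  have hmN := cnt_le e y N
  set m : ℝ := (cnt e y N : ℝ) with hmdef
  have hm0 : 0 < m := by rw [hmdef]; exact_mod_cast hm
  have hmN' : m ≤ N := by rw [hmdef]; exact_mod_cast hmN
  have hN0 : (0 : ℝ) < N := hm0.trans_le hmN'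
  set δ : ℝ := N / m with hδ
  have hδ1 : 1 ≤ δ := by rw [hδ, le_div_iff₀ hm0]; linarith
  set w : ℝ := 1 - a ^ δ with hw
  have hB0 : 0 < a ^ δ := Real.rpow_pos_of_pos ha0 _
  have hw0 : 0 < w := by
    have := Real.rpow_lt_one ha0.le ha1 (by linarith : 0 < δ)
    linarith
  -- `z` is the state right after an occurrence when all `m` occurrences are equally spaced:
  -- it solves `z = (1 - a) + a ^ δ * z`.
  set z : ℝ := (1 - a) / w with hz
  have hz0 : 0 < z := div_pos (by linarith) hw0
  have hzδ : m / N ≤ z := by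
    -- Bernoulli: `1 - a ^ δ ≤ δ * (1 - a)`.
    have hb := one_add_mul_self_le_rpow_one_add (s := a - 1) (by linarith) hδ1
    rw [add_sub_cancel] at hb
    have hδm : δ * m = N := by rw [hδ]; field_simp
    rw [hz, div_le_div_iff₀ hN0 hw0]
    have := mul_le_mul_of_nonneg_left hb hm0.le
    nlinarith
  set s : ℕ → ℝ := fun k => tail a e y k + a ^ k * v with hs
  have hs0 : ∀ k, 0 < s k := fun k =>
    add_pos_of_nonneg_of_pos (tail_nonneg ha0 ha1 e y k) (mul_pos (pow_pos ha0 k) hv)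
  have key : ∀ k : ℕ, Real.log (s 0) + Real.log a * ((k : ℝ) - cnt e y k)
      + cnt e y k * (w * Real.log z - (1 - w) * Real.log a * (δ - 1))
      - w * (∑ i ∈ range k, if e i = y then Real.log (s i) else 0) ≤ Real.log (s k) := by
    intro k
    induction k with
    | zero => simp [cnt_zero]
    | succ k ih =>
      rw [cnt_succ, Finset.sum_range_succ]
      by_cases h : e k = y
      · simp only [h, if_true]
        have hsucc : s (k + 1) = w * z + (1 - w) * (a * s k / (1 - w)) := by
          have : w * z = 1 - a := by rw [hz]; field_simp
          have h2 : (1 - w) ≠ 0 := by rw [hw]; linarith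
          rw [mul_div_cancel₀ _ h2, this]
          simp only [hs, tail, h, if_true]; ring
        have h1w : 1 - w = a ^ δ := by rw [hw]; ring
        have hY : 0 < a * s k / (1 - w) := by
          rw [h1w]; exact div_pos (mul_pos ha0 (hs0 k)) hB0
        -- Jensen with weights `w = 1 - a ^ δ` and `a ^ δ`, exact in the equally spaced case.
        have hcc := strictConcaveOn_log_Ioi.concaveOn.2 (Set.mem_Ioi.2 hz0) (Set.mem_Ioi.2 hY)
          hw0.le (by rw [h1w]; exact hB0.le : (0:ℝ) ≤ 1 - w) (by ring)
        simp only [smul_eq_mul] at hcc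
        rw [← hsucc] at hcc
        have hlY : Real.log (a * s k / (1 - w)) = Real.log a + Real.log (s k) - δ * Real.log a := by
          rw [h1w, Real.log_div (mul_pos ha0 (hs0 k)).ne' hB0.ne',
            Real.log_mul ha0.ne' (hs0 k).ne', Real.log_rpow ha0]
        rw [hlY] at hcc
        push_cast
        linarith
      · simp only [h, if_false]
        have hsucc : s (k + 1) = a * s k := by
          simp only [hs, tail, h, if_false]; ring
        rw [hsucc, Real.log_mul ha0.ne' (hs0 k).ne']
        push_cast
        linarith
  have hN := key N
  have hsN : s N = s 0 := by simp only [hs, hper]; simp [tail]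
  rw [hsN, ← hmdef] at hN
  have hδm : m * (δ - 1) = N - m := by rw [hδ]; field_simp
  have hlz : m * Real.log (m / N) ≤ m * Real.log z :=
    mul_le_mul_of_nonneg_left (Real.log_le_log (div_pos hm0 hN0) hzδ) hm0.le
  have hfin : w * (m * Real.log z + Real.log a * (N - m)) ≤
      w * (∑ i ∈ range N, if e i = y then Real.log (s i) else 0) := by
    have : m * (w * Real.log z - (1 - w) * Real.log a * (δ - 1))
      = w * (m * Real.log z) - (1 - w) * Real.log a * (N - m) := by rw [← hδm]; ring
    rw [this] at hN
    linarith
  have := le_of_mul_le_mul_left hfin hw0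
  linarith

/-- Starting from `q ≥ v` instead of `v` helps at every occurrence of `y`. At the first one both
states are still proportional to their starting values, so there the gain is exactly `log (q / v)`. -/
lemma start_bound_of_ge {a : ℝ} (ha0 : 0 < a) (ha1 : a < 1) (e : ℕ → Bool) (y : Bool)
    {q v : ℝ} (hv : 0 < v) (hvq : v ≤ q) (K : ℕ) :
    (∑ k ∈ range K, if e k = y then
        Real.log (tail a e y k + a ^ k * v) - Real.log (tail a e y k + a ^ k * q) else 0) ≤
      if cnt e y K = 0 then 0 else Real.log v - Real.log q := by
  induction K with
  | zero => simp [cnt_zero]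
  | succ k ih =>
    rw [cnt_succ, Finset.sum_range_succ]
    by_cases h : e k = y
    · have hT := tail_nonneg ha0 ha1 e y k
      have hak := pow_pos ha0 k
      by_cases h0 : cnt e y k = 0
      · simp only [h0, if_true] at ih
        rw [tail_eq_zero a e y k h0]
        simp only [h, h0, if_true, zero_add, one_ne_zero, if_false]
        rw [Real.log_mul hak.ne' hv.ne', Real.log_mul hak.ne' (hv.trans_le hvq).ne']
        linarith
      · simp only [h0, if_false] at ih
        have : Real.log (tail a e y k + a ^ k * v) ≤ Real.log (tail a e y k + a ^ k * q) :=
          Real.log_le_log (by positivity) (by gcongr)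
        simp only [h, if_true, Nat.add_eq_zero_iff, h0, false_and, if_false]
        linarith
    · simpa [h] using ih

/-- Starting from an arbitrary `q > 0` instead of `v` costs `log (v / q)` at the first occurrence
of `y`, and at most `-log (1 - a ^ r)` at an occurrence preceded by `r ≥ 1` others, by `le_tail`. -/
lemma start_bound {a : ℝ} (ha0 : 0 < a) (ha1 : a < 1) (e : ℕ → Bool) (y : Bool)
    {q v : ℝ} (hq : 0 < q) (hv : 0 < v) (hv1 : v ≤ 1) (K : ℕ) :
    (∑ k ∈ range K, if e k = y then
        Real.log (tail a e y k + a ^ k * v) - Real.log (tail a e y k + a ^ k * q) else 0) ≤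
      (if cnt e y K = 0 then 0 else Real.log v - Real.log q)
        + ∑ i ∈ range (cnt e y K - 1), -Real.log (1 - a ^ (i + 1)) := by
  induction K with
  | zero => simp [cnt_zero]
  | succ k ih =>
    rw [cnt_succ, Finset.sum_range_succ]
    by_cases h : e k = y
    · have hT := tail_nonneg ha0 ha1 e y k
      have hak := pow_pos ha0 k
      by_cases h0 : cnt e y k = 0
      · simp only [h0, if_true] at ih
        rw [tail_eq_zero a e y k h0]
        simp only [h, h0, if_true, zero_add, one_ne_zero, if_false]
        rw [Real.log_mul hak.ne' hv.ne', Real.log_mul hak.ne' hq.ne']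
        simp at ih ⊢
        linarith
      · simp only [h0, if_false] at ih
        obtain ⟨r, hr⟩ := Nat.exists_eq_succ_of_ne_zero h0
        have hle := le_tail ha0 ha1 e y k
        simp only [hr, Nat.succ_eq_add_one] at hle ih ⊢
        simp only [h, if_true, Nat.add_eq_zero_iff, one_ne_zero, and_false, if_false,
          Nat.add_sub_cancel] at ih ⊢
        rw [Finset.sum_range_succ]
        have hr1 : a ^ (r + 1) < 1 := pow_lt_one₀ ha0.le ha1 (by omega)
        have har := pow_pos ha0 (r + 1)
        have hTpos : 0 < tail a e y k := by
          have : 0 < a ^ (r + 1) * tail a e y k :=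
            (mul_pos hak (by linarith)).trans_le hle
          exact pos_of_mul_pos_right this har.le
        have h1 : Real.log ((1 - a ^ (r + 1)) * (tail a e y k + a ^ k * v)) ≤
            Real.log (tail a e y k + a ^ k * q) := by
          apply Real.log_le_log
          · exact mul_pos (by linarith) (by positivity)
          · have := mul_le_mul_of_nonneg_left hv1 (mul_pos hak (sub_pos.2 hr1)).le
            have := mul_pos hak hq
            nlinarith
        rw [Real.log_mul (by linarith) (by positivity)] at h1
        linarith
    · simpa [h] using ih

/-- Loss on the occurrences of one letter, by comparison with the periodic orbit through `v`. The
`π²` term is needed only if the orbit starts above `q`. -/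
lemma letter_bound {a : ℝ} (ha0 : 0 < a) (ha1 : a < 1) (e : ℕ → Bool) (y : Bool) {N : ℕ}
    {q v : ℝ} (hq : 0 < q) (hv : 0 < v) (hv1 : v ≤ 1)
    (hper : tail a e y N + a ^ N * v = v) (hm : 0 < cnt e y N) :
    -(∑ k ∈ range N, if e k = y then Real.log (tail a e y k + a ^ k * q) else 0) ≤
      -((cnt e y N : ℝ) * Real.log (cnt e y N / N)) - Real.log a * ((N : ℝ) - cnt e y N)
        + (Real.log v - Real.log q)
        + if v ≤ q then 0 else π ^ 2 / 6 / (-Real.log a) := by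
  have h1 := periodic_bound ha0 ha1 e y hv hper hm
  have h2 : (∑ k ∈ range N, if e k = y then
        Real.log (tail a e y k + a ^ k * v) - Real.log (tail a e y k + a ^ k * q) else 0) ≤
      (Real.log v - Real.log q) + if v ≤ q then 0 else π ^ 2 / 6 / (-Real.log a) := by
    split_ifs with hvq
    · have := start_bound_of_ge ha0 ha1 e y hv hvq N
      simpa [hm.ne'] using this
    · have := start_bound ha0 ha1 e y hq hv hv1 N
      rw [if_neg hm.ne'] at this
      exact this.trans (by gcongr; exact sum_neg_log_le ha0 ha1 _)
  have h3 : (∑ k ∈ range N, if e k = y then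
        Real.log (tail a e y k + a ^ k * v) - Real.log (tail a e y k + a ^ k * q) else 0) =
      (∑ k ∈ range N, if e k = y then Real.log (tail a e y k + a ^ k * v) else 0) -
      (∑ k ∈ range N, if e k = y then Real.log (tail a e y k + a ^ k * q) else 0) := by
    rw [← Finset.sum_sub_distrib]
    refine Finset.sum_congr rfl (fun k _ => ?_)
    split_ifs <;> simp
  linarith

/-- The case of a constant sequence, whose periodic orbit is constantly `1`. -/
lemma single_letter_bound {a : ℝ} (ha0 : 0 < a) (ha1 : a < 1) (e : ℕ → Bool) (y : Bool) {N : ℕ}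
    (hN : 1 ≤ N) {q ε : ℝ} (hε : 0 < ε) (hεq : ε ≤ q)
    (hm : cnt e y N = N) (hT : tail a e y N = 1 - a ^ N) :
    -(∑ k ∈ range N, if e k = y then Real.log (tail a e y k + a ^ k * q) else 0) ≤
      -Real.log ε + π ^ 2 / 6 / (-Real.log a) + ((N : ℝ) - 1) * (-Real.log a) := by
  have hc : 0 < -Real.log a := by have := Real.log_neg ha0 ha1; linarith
  have hZ : 0 ≤ π ^ 2 / 6 / (-Real.log a) := by positivity
  have h := letter_bound ha0 ha1 e y (hε.trans_le hεq) one_pos le_rfl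
    (by rw [hT]; ring) (by omega : 0 < cnt e y N)
  have hN0 : (N : ℝ) ≠ 0 := by positivity
  rw [hm, div_self hN0, Real.log_one] at h
  have h2 := Real.log_le_log hε hεq
  have h3 : 0 ≤ ((N : ℝ) - 1) * (-Real.log a) :=
    mul_nonneg (by have : (1 : ℝ) ≤ N := by exact_mod_cast hN
                   linarith) hc.le
  split_ifs at h <;> linarith

/-! ### Redundancy on a segment -/

/-- One-segment bound in nats, for smoothing started at a distribution `q` with both probabilities
at least `ε`. -/
lemma segment_bound {a : ℝ} (ha : 1 / 2 < a) (ha1 : a < 1) (e : ℕ → Bool) {N : ℕ} (hN : 1 ≤ N)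
    {q : Bool → ℝ} {ε : ℝ} (hq : q false + q true = 1) (hε : 0 < ε) (hεq : ∀ y, ε ≤ q y) :
    -(∑ k ∈ range N, Real.log (tail a e (e k) k + a ^ k * q (e k))) ≤
      -((cnt e false N : ℝ) * Real.log (cnt e false N / N))
        - (cnt e true N : ℝ) * Real.log (cnt e true N / N)
        - Real.log ε + π ^ 2 / 6 / (-Real.log a) + ((N : ℝ) - 1) * (-Real.log a) := by
  have ha0 : 0 < a := by linarith
  have hc : 0 < -Real.log a := by have := Real.log_neg ha0 ha1; linarith
  have hZ : 0 ≤ π ^ 2 / 6 / (-Real.log a) := by positivity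
  have hN0 : (N : ℝ) ≠ 0 := by positivity
  have hsplit : ∑ k ∈ range N, Real.log (tail a e (e k) k + a ^ k * q (e k)) =
      (∑ k ∈ range N, if e k = false then Real.log (tail a e false k + a ^ k * q false) else 0) +
      (∑ k ∈ range N, if e k = true then Real.log (tail a e true k + a ^ k * q true) else 0) := by
    rw [← Finset.sum_add_distrib]
    refine Finset.sum_congr rfl (fun k _ => ?_)
    cases e k <;> simp
  have hadd := cnt_add e N
  have htadd := tail_add a e N
  have hzero : ∀ y q', cnt e y N = 0 →
      (∑ k ∈ range N, if e k = y then Real.log (tail a e y k + a ^ k * q') else 0) = 0 := by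
    intro y q' h
    refine Finset.sum_eq_zero (fun k hk => if_neg ?_)
    rw [cnt, Finset.card_eq_zero, Finset.filter_eq_empty_iff] at h
    exact h hk
  rw [hsplit]
  by_cases hf : cnt e false N = 0
  · have htN : cnt e true N = N := by omega
    have := single_letter_bound ha0 ha1 e true hN hε (hεq true) htN
      (by rw [tail_eq_zero a e false N hf] at htadd; linarith)
    rw [hzero false _ hf, hf, htN, div_self hN0]
    simp only [Real.log_one, Nat.cast_zero, zero_mul, mul_zero]
    linarith
  by_cases ht : cnt e true N = 0
  · have hfN : cnt e false N = N := by omega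
    have := single_letter_bound ha0 ha1 e false hN hε (hεq false) hfN
      (by rw [tail_eq_zero a e true N ht] at htadd; linarith)
    rw [hzero true _ ht, ht, hfN, div_self hN0]
    simp only [Real.log_one, Nat.cast_zero, zero_mul, mul_zero]
    linarith
  -- Both letters occur: compare with the starting distribution `v` of the `N`-periodic orbit.
  have haN : 0 < 1 - a ^ N := sub_pos.2 (pow_lt_one₀ ha0.le ha1 (by omega))
  have hTpos : ∀ y, cnt e y N ≠ 0 → 0 < tail a e y N := by
    intro y hy
    have h1 : 0 < a ^ cnt e y N * tail a e y N :=
      (mul_pos (pow_pos ha0 N) (sub_pos.2 (pow_lt_one₀ ha0.le ha1 hy))).trans_le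
        (le_tail ha0 ha1 e y N)
    exact pos_of_mul_pos_right h1 (pow_pos ha0 _).le
  set v : Bool → ℝ := fun y => tail a e y N / (1 - a ^ N) with hv
  have hvadd : v false + v true = 1 := by
    simp only [hv]; rw [← add_div, htadd, div_self haN.ne']
  have hper : ∀ y, tail a e y N + a ^ N * v y = v y := by
    intro y; simp only [hv]; field_simp; ring
  have hv0 : 0 < v false := div_pos (hTpos _ hf) haN
  have hv1 : 0 < v true := div_pos (hTpos _ ht) haN
  have hq0 := hε.trans_le (hεq false)
  have hq1 := hε.trans_le (hεq true)
  have b0 := letter_bound ha0 ha1 e false hq0 hv0 (by linarith) (hper _) (Nat.pos_of_ne_zero hf)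
  have b1 := letter_bound ha0 ha1 e true hq1 hv1 (by linarith) (hper _) (Nat.pos_of_ne_zero ht)
  -- The two first occurrences cost `log (v₀ v₁ / (q₀ q₁)) ≤ log (1 / (2 ε))`. As `1 / 2 < a`, this
  -- leaves room for the one `log (1 / a)` by which the periodic orbits exceed the budget.
  have hprod : v false * v true * ε ≤ a * (q false * q true) := by
    have h4 : v false * v true ≤ 1 / 4 := by nlinarith [sq_nonneg (v false - v true)]
    have h5 : ε / 2 ≤ q false * q true := by
      rcases le_total (q false) (q true) with h | h
      · nlinarith [hεq false, hεq true]
      · nlinarith [hεq false, hεq true]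
    nlinarith [mul_le_mul_of_nonneg_right h4 hε.le, mul_pos hq0 hq1]
  have hlog := Real.log_le_log (by positivity) hprod
  rw [Real.log_mul (by positivity) hε.ne', Real.log_mul hv0.ne' hv1.ne',
    Real.log_mul ha0.ne' (by positivity), Real.log_mul hq0.ne' hq1.ne'] at hlog
  have hcast : (cnt e false N : ℝ) + cnt e true N = N := by exact_mod_cast hadd
  have hla : Real.log a * ((N : ℝ) - cnt e false N) + Real.log a * ((N : ℝ) - cnt e true N)
      = Real.log a * N := by rw [← hcast]; ring
  -- `v` and `q` both sum to `1`, so at most one letter has `q y < v y`: the `π²` term is paid once.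
  split_ifs at b0 b1 <;> linarith

lemma card_filter_Icc (x : ℕ → Bool) (A N : ℕ) :
    ((Finset.Icc (A + 1) (A + N)).filter (fun i => x i = true)).card =
      cnt (fun i => x (A + i + 1)) true N := by
  induction N with
  | zero => simp [cnt]
  | succ N ih =>
    rw [cnt_succ, ← ih, Finset.card_filter, Finset.card_filter, ← add_assoc,
      Finset.sum_Icc_succ_top (by omega)]

lemma empEnt_mul_log (x : ℕ → Bool) (A : ℕ) {N : ℕ} (hN : 1 ≤ N) :
    empEnt x A (A + N) * Real.log 2 =
      -((cnt (fun i => x (A + i + 1)) false N : ℝ)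
          * Real.log (cnt (fun i => x (A + i + 1)) false N / N))
        - (cnt (fun i => x (A + i + 1)) true N : ℝ)
          * Real.log (cnt (fun i => x (A + i + 1)) true N / N) := by
  have hadd : (cnt (fun i => x (A + i + 1)) false N : ℝ)
      + cnt (fun i => x (A + i + 1)) true N = N := by
    exact_mod_cast cnt_add (fun i => x (A + i + 1)) N
  have hN0 : (N : ℝ) ≠ 0 := by positivity
  have hl2 : Real.log 2 ≠ 0 := (Real.log_pos one_lt_two).ne'
  have h0 : 1 - (cnt (fun i => x (A + i + 1)) true N : ℝ) / N
      = cnt (fun i => x (A + i + 1)) false N / N := by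
    field_simp; linarith
  unfold empEnt binEnt
  rw [card_filter_Icc]
  push_cast
  rw [add_sub_cancel_left, h0]
  simp only [Real.logb]
  field_simp
  ring

/-- Redundancy on a single segment `(A, B]`. The state at its start is at least `a ^ A * p false`,
which costs `A * log (1 / a)`; with `(B - A - 1) * log (1 / a)` from within the segment this makes
`(B - 1) * log (1 / a)`. -/
lemma codeLen_sub_empEnt_le {a : ℝ} (ha : 1 / 2 < a) (ha1 : a < 1)
    {p : Bool → ℝ} (hp0 : 0 < p false) (hple : p false ≤ p true) (hpsum : p false + p true = 1)
    (x : ℕ → Bool) {A B n : ℕ} (hAB : A < B) (hBn : B ≤ n) :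
    codeLen (fun _ => a) p x A B - empEnt x A B ≤
        Real.logb 2 (1 / p false) +
          (π * Real.logb 2 (Real.exp 1)) ^ 2 / (6 * Real.logb 2 (1 / a)) +
            ((n : ℝ) - 1) * Real.logb 2 (1 / a) := by
  obtain ⟨N, rfl⟩ := Nat.exists_eq_add_of_lt hAB
  rw [add_assoc] at hBn ⊢
  set M := N + 1
  have ha0 : 0 < a := by linarith
  have hl2 : 0 < Real.log 2 := Real.log_pos one_lt_two
  have hc : 0 < -Real.log a := by have := Real.log_neg ha0 ha1; linarith
  have hA := pow_pos ha0 A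
  have hseg := segment_bound ha ha1 (fun i => x (A + i + 1)) (N := M) (by omega)
    (espP_add a hpsum x A) (mul_pos hA hp0) (le_espP ha0 ha1 hple x A)
  rw [sub_sub, add_assoc] at hseg
  have hcode : codeLen (fun _ => a) p x A (A + M) * Real.log 2 =
      -(∑ k ∈ range M, Real.log (tail a (fun i => x (A + i + 1)) (x (A + k + 1)) k
        + a ^ k * espP (fun _ => a) p x A (x (A + k + 1)))) := by
    unfold codeLen
    rw [Finset.sum_Ico_eq_sum_range, Finset.sum_mul, ← Finset.sum_neg_distrib,
      Nat.add_sub_cancel_left]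
    refine Finset.sum_congr rfl (fun k _ => ?_)
    rw [espP_eq, Real.logb, neg_mul, div_mul_cancel₀ _ hl2.ne']
  have hent := empEnt_mul_log x A (N := M) (by omega)
  rw [Real.log_mul hA.ne' hp0.ne', Real.log_pow] at hseg
  have hrhs : (Real.logb 2 (1 / p false) +
          (π * Real.logb 2 (Real.exp 1)) ^ 2 / (6 * Real.logb 2 (1 / a)) +
            ((n : ℝ) - 1) * Real.logb 2 (1 / a)) * Real.log 2 =
      -Real.log (p false) + π ^ 2 / 6 / (-Real.log a) + ((n : ℝ) - 1) * (-Real.log a) := by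
    simp only [Real.logb, one_div, Real.log_inv, Real.log_exp]
    have : Real.log a ≠ 0 := by linarith
    field_simp
  have hn : ((A : ℝ) + M - 1) * (-Real.log a) ≤ ((n : ℝ) - 1) * (-Real.log a) := by
    have : (A : ℝ) + M ≤ n := by exact_mod_cast hBn
    gcongr
  refine le_of_mul_le_mul_right ?_ hl2
  rw [hrhs, sub_mul, hcode, hent]
  linarith

lemma codeLen_partition (α : ℕ → ℝ) (p : Bool → ℝ) (x : ℕ → Bool) {n : ℕ}
    {S : Finset (ℕ × ℕ)} (hS : IsPartition S n) :
    codeLen α p x 0 n = ∑ s ∈ S, codeLen α p x s.1 s.2 := by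
  have hU : Finset.Ico 0 n = S.biUnion (fun s => Finset.Ico s.1 s.2) := by
    ext i
    simp only [Finset.mem_Ico, Finset.mem_biUnion]
    constructor
    · rintro ⟨-, hi⟩
      obtain ⟨s, ⟨hs, h1, h2⟩, -⟩ := hS.2 (i + 1) (by omega) (by omega)
      exact ⟨s, hs, by omega, by omega⟩
    · rintro ⟨s, hs, h1, h2⟩
      have := hS.1 s hs
      omega
  unfold codeLen
  rw [hU, Finset.sum_biUnion]
  intro s hs t ht hst
  refine Finset.disjoint_left.2 (fun i hi hi' => hst ?_)
  rw [Finset.mem_Ico] at hi hi'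
  have hsn := hS.1 s hs
  exact (hS.2 (i + 1) (by omega) (by omega)).unique
    ⟨hs, by omega, by omega⟩ ⟨ht, by omega, by omega⟩

end ES

theorem stmt12 (a : ℝ) (ha : 1 / 2 < a) (ha1 : a < 1)
    (p : Bool → ℝ) (hp0 : 0 < p false) (hple : p false ≤ p true)
    (hpsum : p false + p true = 1)
    (x : ℕ → Bool) (n : ℕ) (hn : 1 ≤ n)
    (S : Finset (ℕ × ℕ)) (hS : IsPartition S n) :
    codeLen (fun _ => a) p x 0 n - ∑ s ∈ S, empEnt x s.1 s.2 ≤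
      (S.card : ℝ) *
        (Real.logb 2 (1 / p false) +
          (π * Real.logb 2 (Real.exp 1)) ^ 2 / (6 * Real.logb 2 (1 / a)) +
            ((n : ℝ) - 1) * Real.logb 2 (1 / a)) := by
  rw [ES.codeLen_partition _ _ _ hS, ← Finset.sum_sub_distrib, ← nsmul_eq_mul]
  refine Finset.sum_le_card_nsmul _ _ _ (fun s hs => ?_)
  exact ES.codeLen_sub_empEnt_le ha ha1 hp0 hple hpsum x (hS.1 s hs).1 (hS.1 s hs).2
end

section
/- Let n ≥ 5, let α = exp(−π/√(6(n−1))) (which satisfies α > 1/2), and let ESP = (α, p) be the exponential smoothing model with fixed smoothing rate αₖ = α for all k and p(0) ≤ p(1), p(0), p(1) > 0. Then for any bit sequence x_{1:n} of length n and any partition S of (0, n], ℓ(x_{1:n}; ESP) − ∑_{(a,b]∈S} h(x_{a+1:b}) ≤ |S|·[ (2π·log₂ e/√6)·√n + log₂(1/p(0)) ]. -/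
/-!
Only one segment `(a, b]` of length `m` has to be treated, because both the code length and the
claimed bound are additive over segments. Let `P` be the model's distribution after `a` letters,
`θ` the empirical distribution on the segment, and `L = -log α`.

The heart of the proof is a potential argument comparing the model with an arbitrary fixed `θ`,
where each step is allowed an extra loss of `L`, that is, a factor `α`. Let `G K c Q` be the
product of the truncated ratios `min 1 (Q_k / (α c))` along a run of `K` copies of a letter whose
model probability starts at `Q` and whose reference probability is `c`. The product `E` of the two
potentials `G`, one for each letter, satisfies `E (K + 1) P ≤ (P y / (α θ y)) * E K P'`, where `P'`
is `P` updated by `y` (`potential_step`). If `y` is underestimated this is the recursion of `G`.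
Otherwise it is the exchange argument `G_seen`: the words `yz` and `zy` have the same probability,
but `zy` leaves less mass on `z`, so that the occurrence of `y` may be postponed until it is harmless.

Hence the probability of the segment is at least `α ^ m * E` times that under `θ`, and only one of
the two potentials differs from `1`. Since every letter has probability at least `α ^ a * p false`,
this gives a loss of at most `(b - 1) L + log (1 / p false) - ∑ log (1 - α ^ k)`, where `α ≥ 1/2`
pays for one factor `α` when `E = 1`. Finally `-∑ log (1 - α ^ k) ≤ π ^ 2 / (6 L)` by expanding
the logarithm and using `ζ(2) = π ^ 2 / 6`, and the chosen `α` makes this equal to `(n - 1) L`.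
-/

open Finset Real

/-! ### The potential of a letter -/

/-- Potential of a letter with current model probability `Q` and reference probability `c`: the
product of the ratios `Q_k / (α c)`, truncated at `1`, along a run of `K` occurrences of that
letter, each of which updates `Q` to `1 - α (1 - Q)`. -/
noncomputable def G (α c : ℝ) : ℕ → ℝ → ℝ
  | 0, _ => 1
  | K + 1, Q => min 1 (Q / (α * c)) * G α c K (1 - α * (1 - Q))

section Potential

variable {α c : ℝ}

lemma G_nonneg (hα : 0 < α) (hα1 : α < 1) (hc : 0 < c) (K : ℕ) :
    ∀ Q : ℝ, 0 ≤ Q → 0 ≤ G α c K Q := by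
  induction K with
  | zero => intro Q _; simp [G]
  | succ K ih =>
    intro Q hQ
    have h1 : 0 ≤ 1 - α * (1 - Q) := by nlinarith
    have h2 : 0 ≤ Q / (α * c) := by positivity
    exact mul_nonneg (le_min zero_le_one h2) (ih _ h1)

lemma G_mono (hα : 0 < α) (hα1 : α < 1) (hc : 0 < c) (K : ℕ) :
    ∀ Q R : ℝ, 0 ≤ Q → Q ≤ R → G α c K Q ≤ G α c K R := by
  induction K with
  | zero => intro Q R _ _; simp [G]
  | succ K ih =>
    intro Q R hQ hQR
    have h1 : 0 ≤ 1 - α * (1 - Q) := by nlinarith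
    have h2 : 0 ≤ R / (α * c) := by have := hQ.trans hQR; positivity
    have h3 : Q / (α * c) ≤ R / (α * c) := by gcongr
    exact mul_le_mul (min_le_min le_rfl h3) (ih _ _ h1 (by nlinarith))
      (G_nonneg hα hα1 hc K _ h1) (le_min zero_le_one h2)

lemma G_le_one (hα : 0 < α) (hα1 : α < 1) (hc : 0 < c) (K : ℕ) :
    ∀ Q : ℝ, 0 ≤ Q → G α c K Q ≤ 1 := by
  induction K with
  | zero => intro Q _; simp [G]
  | succ K ih =>
    intro Q hQ
    have h1 : 0 ≤ 1 - α * (1 - Q) := by nlinarith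
    exact mul_le_one₀ (min_le_left _ _) (G_nonneg hα hα1 hc K _ h1) (ih _ h1)

lemma G_succ_le (hα : 0 < α) (hα1 : α < 1) (hc : 0 < c) (K : ℕ) :
    ∀ Q : ℝ, 0 ≤ Q → G α c (K + 1) Q ≤ G α c K Q := by
  induction K with
  | zero => intro Q hQ; exact (G_le_one hα hα1 hc 1 Q hQ).trans (by simp [G])
  | succ K ih =>
    intro Q hQ
    exact mul_le_mul_of_nonneg_left (ih _ (by nlinarith)) (le_min zero_le_one (by positivity))

lemma G_eq_one (hα : 0 < α) (hα1 : α < 1) (hc : 0 < c) (K : ℕ) :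
    ∀ Q : ℝ, Q ≤ 1 → α * c ≤ Q → G α c K Q = 1 := by
  induction K with
  | zero => intro Q _ _; simp [G]
  | succ K ih =>
    intro Q hQ hcQ
    have h1 : 1 ≤ Q / (α * c) := by rw [le_div_iff₀ (by positivity)]; linarith
    rw [G, min_eq_left h1, one_mul]
    exact ih _ (by nlinarith) (by nlinarith)

/-- Exchange argument: if the letter `y` with reference probability `1 - c` and model probability
`1 - Q` is not underestimated by more than a factor `α`, then seeing `y`, which shrinks the
probability `Q` of the other letter to `α Q`, costs no more than the gain
`(1 - Q) / (α (1 - c))`. -/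
lemma G_seen (hα : 0 < α) (hα1 : α < 1) (hc : 0 < c) (hc1 : c < 1) (K : ℕ) :
    ∀ Q : ℝ, 0 < Q → Q < 1 → α * (1 - c) ≤ 1 - Q →
      G α c K Q ≤ (1 - Q) / (α * (1 - c)) * G α c K (α * Q) := by
  have hd : 0 < 1 - c := by linarith
  induction K with
  | zero =>
    intro Q _ _ h
    simp only [G, mul_one]
    rw [le_div_iff₀ (by positivity)]; linarith
  | succ K ih =>
    intro Q hQ hQ1 h
    have hr : 1 ≤ (1 - Q) / (α * (1 - c)) := by
      rw [le_div_iff₀ (by positivity)]; linarith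
    rcases le_or_gt c Q with hcQ | hcQ
    · rw [G_eq_one hα hα1 hc _ (α * Q) (by nlinarith) (by nlinarith), mul_one]
      exact (G_le_one hα hα1 hc _ _ hQ.le).trans hr
    · have hS : 1 - (1 - α * (1 - Q)) = α * (1 - Q) := by ring
      have ih' := ih (1 - α * (1 - Q)) (by nlinarith) (by nlinarith) (by rw [hS]; nlinarith)
      rw [hS] at ih'
      have hmono : G α c K (α * (1 - α * (1 - Q))) ≤ G α c K (1 - α * (1 - α * Q)) :=
        G_mono hα hα1 hc K _ _ (mul_nonneg hα.le (by nlinarith)) (by nlinarith)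
      have hmin : min 1 (α * Q / (α * c)) = Q / c := by
        rw [mul_div_mul_left _ _ hα.ne', min_eq_right]
        rw [div_le_one hc]; exact hcQ.le
      rw [G, G, hmin]
      have hG0 : 0 ≤ G α c K (1 - α * (1 - Q)) := G_nonneg hα hα1 hc K _ (by nlinarith)
      calc min 1 (Q / (α * c)) * G α c K (1 - α * (1 - Q))
          ≤ Q / (α * c) * G α c K (1 - α * (1 - Q)) := by gcongr; exact min_le_right _ _
        _ ≤ Q / (α * c) * (α * (1 - Q) / (α * (1 - c)) * G α c K (1 - α * (1 - α * Q))) := by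
            gcongr
            refine ih'.trans ?_
            have : 0 ≤ α * (1 - Q) / (α * (1 - c)) := by
              have : 0 < 1 - Q := by linarith
              positivity
            gcongr
        _ = (1 - Q) / (α * (1 - c)) * (Q / c * G α c K (1 - α * (1 - α * Q))) := by
            field_simp

/-- One step of the model, for a letter with probability `P` and reference probability `t`. -/
lemma potential_step (hα : 0 < α) (hα1 : α < 1) {t P : ℝ} (ht : 0 < t) (ht1 : t < 1)
    (hP : 0 < P) (hP1 : P < 1) (K : ℕ) :
    G α t (K + 1) P * G α (1 - t) (K + 1) (1 - P) ≤
      P / (α * t) * (G α t K (1 - α * (1 - P)) * G α (1 - t) K (α * (1 - P))) := by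
  have hd : 0 < 1 - t := by linarith
  have hQ : 0 < 1 - P := by linarith
  rcases lt_or_ge P (α * t) with h | h
  · rw [G_eq_one hα hα1 hd K (α * (1 - P)) (by nlinarith) (by nlinarith), mul_one]
    have h1 : P / (α * t) ≤ 1 := by rw [div_le_one (by positivity)]; exact h.le
    rw [← min_eq_right h1]
    exact mul_le_of_le_one_right (G_nonneg hα hα1 ht (K + 1) P hP.le)
      (G_le_one hα hα1 hd _ _ hQ.le)
  · rw [G_eq_one hα hα1 ht (K + 1) P hP1.le h,
      G_eq_one hα hα1 ht K (1 - α * (1 - P)) (by nlinarith) (by nlinarith), one_mul, one_mul]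
    have h1 := G_seen hα hα1 hd (by linarith) K (1 - P) hQ (by linarith) (by linarith)
    rw [sub_sub_cancel, sub_sub_cancel] at h1
    refine le_trans ?_ h1
    exact G_succ_le hα hα1 hd K _ hQ.le

/-- After `j` occurrences a letter has probability at least `1 - α ^ j`, whatever it was before;
the bound does not depend on `c`. -/
lemma G_ge_prod (hα : 0 < α) (hα1 : α < 1) (hc : 0 < c) (hc1 : c < 1) (K : ℕ) :
    ∀ (j : ℕ) (Q : ℝ), 1 - α ^ j ≤ Q → Q ≤ 1 →
      ∏ k ∈ range K, (1 - α ^ (k + j)) ≤ G α c K Q := by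
  induction K with
  | zero => intro j Q _ _; simp [G]
  | succ K ih =>
    intro j Q hQ hQ1
    have hj : α ^ j ≤ 1 := pow_le_one₀ hα.le hα1.le
    have hQ0 : 0 ≤ Q := by linarith
    rw [prod_range_succ', zero_add, mul_comm, G]
    have h1 : Q ≤ min 1 (Q / (α * c)) := by
      refine le_min hQ1 ?_
      rw [le_div_iff₀ (by positivity)]
      have : α * c ≤ 1 := by nlinarith
      nlinarith
    have h2 := ih (j + 1) (1 - α * (1 - Q)) (by rw [pow_succ]; nlinarith) (by nlinarith)
    have h3 : ∏ k ∈ range K, (1 - α ^ (k + 1 + j)) = ∏ k ∈ range K, (1 - α ^ (k + (j + 1))) :=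
      prod_congr rfl fun k _ => by congr 2; ring
    rw [h3]
    refine mul_le_mul (hQ.trans h1) h2 ?_ (hQ0.trans h1)
    exact prod_nonneg fun k _ => sub_nonneg.2 (pow_le_one₀ hα.le hα1.le)

/-- If the letter is underestimated, the first ratio `Q / (α c)` saves one factor `α` over
`G_ge_prod`. -/
lemma G_lower (hα : 0 < α) (hα1 : α < 1) (hc : 0 < c) (hc1 : c < 1) (K : ℕ) (Q : ℝ)
    (hQ : 0 < Q) (hQ1 : Q ≤ 1) (hlt : Q < α * c) :
    Q * ∏ k ∈ range K, (1 - α ^ (k + 1)) ≤ α * G α c (K + 1) Q := by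
  have h1 : Q / (α * c) ≤ 1 := by rw [div_le_one (by positivity)]; exact hlt.le
  have h2 := G_ge_prod hα hα1 hc hc1 K 1 (1 - α * (1 - Q)) (by rw [pow_one]; nlinarith)
    (by nlinarith)
  have h3 : 0 ≤ G α c K (1 - α * (1 - Q)) := G_nonneg hα hα1 hc K _ (by nlinarith)
  rw [G, min_eq_right h1]
  calc _ ≤ Q * G α c K (1 - α * (1 - Q)) := by gcongr
    _ ≤ Q / c * G α c K (1 - α * (1 - Q)) := by
        gcongr
        rw [le_div_iff₀ hc]; nlinarith
    _ = _ := by field_simp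

end Potential

/-! ### Probability of a segment -/

section Model

variable {α : ℝ} {p : Bool → ℝ} {x : ℕ → Bool}

lemma espP_add_not (hpsum : p false + p true = 1) (k : ℕ) (y : Bool) :
    espP (fun _ => α) p x k y + espP (fun _ => α) p x k (!y) = 1 := by
  induction k with
  | zero => cases y <;> simp [espP] <;> linarith
  | succ k ih =>
    have : α * espP (fun _ => α) p x k y + α * espP (fun _ => α) p x k (!y) = α := by
      rw [← mul_add, ih, mul_one]
    cases y <;> cases hx : x (k + 1) <;> simp [espP, hx] at this ⊢ <;> linarith

lemma espP_ge (hα : 0 < α) (hα1 : α < 1) (hple : p false ≤ p true) (k : ℕ) (y : Bool) :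
    α ^ k * p false ≤ espP (fun _ => α) p x k y := by
  induction k with
  | zero => cases y <;> simp [espP, hple]
  | succ k ih =>
    have : α ^ (k + 1) * p false ≤ α * espP (fun _ => α) p x k y := by
      rw [pow_succ']; nlinarith
    rw [espP]; split_ifs <;> linarith

/-- The potential argument, unrolled along the `m` letters that follow the `a`-th one. -/
lemma prod_espP_ge (hα : 0 < α) (hα1 : α < 1) (hp0 : 0 < p false) (hple : p false ≤ p true)
    (hpsum : p false + p true = 1) {θ : Bool → ℝ} (hθ : ∀ y, 0 < θ y)
    (hθs : ∀ y, θ (!y) = 1 - θ y) (m : ℕ) : ∀ a : ℕ,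
    (∏ i ∈ range m, (α * θ (x (a + i + 1)))) *
        (G α (θ true) m (espP (fun _ => α) p x a true) *
          G α (θ false) m (espP (fun _ => α) p x a false)) ≤
      ∏ i ∈ range m, espP (fun _ => α) p x (a + i) (x (a + i + 1)) := by
  induction m with
  | zero => intro a; simp [G]
  | succ m ih =>
    intro a
    have hpos : ∀ k y, 0 < espP (fun _ => α) p x k y := fun k y =>
      (by positivity : 0 < α ^ k * p false).trans_le (espP_ge hα hα1 hple k y)
    have hsum := fun k y => espP_add_not (α := α) (x := x) hpsum k y
    -- the product of the two potentials does not depend on the order of the letters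
    have hsym : ∀ K k y, G α (θ true) K (espP (fun _ => α) p x k true) *
          G α (θ false) K (espP (fun _ => α) p x k false) =
        G α (θ y) K (espP (fun _ => α) p x k y) *
          G α (1 - θ y) K (1 - espP (fun _ => α) p x k y) := by
      intro K k y
      have h := hsum k y
      rw [← hθs, ← h, add_sub_cancel_left]
      cases y
      · exact mul_comm _ _
      · rfl
    set y := x (a + 1) with hy
    have hnext : espP (fun _ => α) p x (a + 1) y = 1 - α * (1 - espP (fun _ => α) p x a y) := by
      rw [espP, if_pos hy]; ring
    have hP1 : espP (fun _ => α) p x a y < 1 := by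
      have := hsum a y; have := hpos a (!y); linarith
    have hθ1 : θ y < 1 := by have := hθs y; have := hθ (!y); linarith
    have hstep := potential_step hα hα1 (hθ y) hθ1 (hpos a y) hP1 m
    have ih' := ih (a + 1)
    rw [hsym _ _ y, hnext, sub_sub_cancel] at ih'
    have e : ∀ i, a + (i + 1) = a + 1 + i := fun i => by ring
    have e1 : ∏ i ∈ range m, (α * θ (x (a + (i + 1) + 1))) =
        ∏ i ∈ range m, (α * θ (x (a + 1 + i + 1))) := prod_congr rfl fun i _ => by rw [e]
    have e2 : ∏ i ∈ range m, espP (fun _ => α) p x (a + (i + 1)) (x (a + (i + 1) + 1)) =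
        ∏ i ∈ range m, espP (fun _ => α) p x (a + 1 + i) (x (a + 1 + i + 1)) :=
      prod_congr rfl fun i _ => by rw [e]
    rw [hsym _ _ y, prod_range_succ', prod_range_succ', add_zero, e1, e2, ← hy]
    have hty := hθ y
    have hPr : 0 ≤ ∏ i ∈ range m, (α * θ (x (a + 1 + i + 1))) :=
      prod_nonneg fun i _ => mul_nonneg hα.le (hθ _).le
    refine le_trans ?_ (mul_le_mul_of_nonneg_right ih' (hpos a y).le)
    rw [mul_assoc, mul_assoc (∏ i ∈ range m, (α * θ (x (a + 1 + i + 1))))]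
    refine mul_le_mul_of_nonneg_left ?_ hPr
    calc _ ≤ α * θ y * _ := mul_le_mul_of_nonneg_left hstep (by positivity)
      _ = _ := by field_simp

/-- Probability of a segment compared with that under an interior reference distribution. -/
lemma prod_espP_ge' (hα : 1 / 2 ≤ α) (hα1 : α < 1) (hp0 : 0 < p false) (hple : p false ≤ p true)
    (hpsum : p false + p true = 1) {θ : Bool → ℝ} (hθ : ∀ y, 0 < θ y)
    (hθs : ∀ y, θ (!y) = 1 - θ y) (m a : ℕ) :
    (∏ i ∈ range (m + 1), θ (x (a + i + 1))) *
        (α ^ (a + m) * p false * ∏ k ∈ range m, (1 - α ^ (k + 1))) ≤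
      ∏ i ∈ range (m + 1), espP (fun _ => α) p x (a + i) (x (a + i + 1)) := by
  have hα0 : 0 < α := by linarith
  have main := prod_espP_ge (x := x) hα0 hα1 hp0 hple hpsum hθ hθs (m + 1) a
  refine le_trans ?_ main
  rw [prod_mul_distrib, prod_const, card_range]
  have hμ := fun y => espP_ge (x := x) hα0 hα1 hple a y
  have hμ0 : 0 < α ^ a * p false := by positivity
  have hs := espP_add_not (α := α) (x := x) hpsum a true
  have hθ1 : ∀ y, θ y < 1 := fun y => by have := hθs y; have := hθ (!y); linarith
  have hs' := hθs true
  simp only [Bool.not_true] at hs hs'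
  set W := ∏ k ∈ range m, (1 - α ^ (k + 1)) with hW
  have hW0 : 0 ≤ W := prod_nonneg fun k _ => sub_nonneg.2 (pow_le_one₀ hα0.le hα1.le)
  have hW1 : W ≤ 1 := prod_le_one (fun k _ => sub_nonneg.2 (pow_le_one₀ hα0.le hα1.le))
    fun k _ => by have : 0 < α ^ (k + 1) := by positivity
                  linarith
  set A := espP (fun _ => α) p x a true
  set B := espP (fun _ => α) p x a false
  have hA : α ^ a * p false ≤ A := hμ true
  have hB : α ^ a * p false ≤ B := hμ false
  have hE : α ^ a * p false * W ≤ α * (G α (θ true) (m + 1) A * G α (θ false) (m + 1) B) := by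
    have hAB : α * θ true ≤ A ∨ α * θ false ≤ B := by
      by_contra! h; rw [hs'] at h; nlinarith
    rcases lt_or_ge A (α * θ true) with h1 | h1
    · rw [G_eq_one hα0 hα1 (hθ false) _ B (by linarith) (hAB.resolve_left h1.not_ge), mul_one]
      exact (mul_le_mul_of_nonneg_right hA hW0).trans
        (G_lower hα0 hα1 (hθ _) (hθ1 _) m A (by linarith) (by linarith) h1)
    · rw [G_eq_one hα0 hα1 (hθ true) _ A (by linarith) h1, one_mul]
      rcases lt_or_ge B (α * θ false) with h2 | h2
      · exact (mul_le_mul_of_nonneg_right hB hW0).trans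
          (G_lower hα0 hα1 (hθ _) (hθ1 _) m B (by linarith) (by linarith) h2)
        -- neither letter is underestimated: the missing factor is paid for by `p false ≤ 1/2 ≤ α`
      · rw [G_eq_one hα0 hα1 (hθ false) _ B (by linarith) h2, mul_one]
        have := mul_le_mul_of_nonneg_left hW1 hμ0.le
        linarith
  have hPr : 0 ≤ ∏ i ∈ range (m + 1), θ (x (a + i + 1)) := prod_nonneg fun i _ => (hθ _).le
  calc _ = (∏ i ∈ range (m + 1), θ (x (a + i + 1))) * α ^ m * (α ^ a * p false * W) := by ring
    _ ≤ (∏ i ∈ range (m + 1), θ (x (a + i + 1))) * α ^ m *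
          (α * (G α (θ true) (m + 1) A * G α (θ false) (m + 1) B)) := by gcongr
    _ = _ := by ring

/-- The reference probability of a `1` may be any `t ∈ [0, 1]`; the endpoints, which are needed for
constant segments, follow by continuity. -/
lemma prod_espP_ge_Icc (hα : 1 / 2 ≤ α) (hα1 : α < 1) (hp0 : 0 < p false)
    (hple : p false ≤ p true) (hpsum : p false + p true = 1) {t : ℝ} (ht : t ∈ Set.Icc (0 : ℝ) 1)
    (m a : ℕ) :
    (∏ i ∈ range (m + 1), (if x (a + i + 1) = true then t else 1 - t)) *
        (α ^ (a + m) * p false * ∏ k ∈ range m, (1 - α ^ (k + 1))) ≤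
      ∏ i ∈ range (m + 1), espP (fun _ => α) p x (a + i) (x (a + i + 1)) := by
  rw [← closure_Ioo (zero_ne_one' ℝ)] at ht
  refine closure_minimal (s := Set.Ioo (0 : ℝ) 1) (t := {t : ℝ |
    (∏ i ∈ range (m + 1), (if x (a + i + 1) = true then t else 1 - t)) *
        (α ^ (a + m) * p false * ∏ k ∈ range m, (1 - α ^ (k + 1))) ≤
      ∏ i ∈ range (m + 1), espP (fun _ => α) p x (a + i) (x (a + i + 1))}) ?_ ?_ ht
  · intro t ht
    refine prod_espP_ge' (θ := fun y => if y = true then t else 1 - t) hα hα1 hp0 hple hpsum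
      ?_ ?_ m a
    · intro y; cases y <;> simp [ht.1, ht.2]
    · intro y; cases y <;> simp
  · refine isClosed_le ?_ continuous_const
    refine Continuous.mul (continuous_finsetProd _ fun i _ => ?_) continuous_const
    split_ifs <;> fun_prop

end Model

/-! ### Code lengths, entropy and partitions -/

/-- Expanding the logarithm and comparing with `ζ(2)`. -/
lemma sum_neg_log_le {L : ℝ} (hL : 0 < L) (K : ℕ) :
    ∑ k ∈ range K, -Real.log (1 - Real.exp (-L) ^ (k + 1)) ≤ π ^ 2 / (6 * L) := by
  have hlt : Real.exp (-L) < 1 := by rw [Real.exp_lt_one_iff]; linarith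
  have h1 : HasSum (fun j : ℕ => ∑ k ∈ range K, (Real.exp (-L) ^ (k + 1)) ^ (j + 1) / ((j : ℝ) + 1))
      (∑ k ∈ range K, -Real.log (1 - Real.exp (-L) ^ (k + 1))) := by
    refine hasSum_sum fun k _ => Real.hasSum_pow_div_log_of_abs_lt_one ?_
    rw [abs_of_pos (by positivity)]
    exact pow_lt_one₀ (Real.exp_pos _).le hlt (by omega)
  have h2 : HasSum (fun j : ℕ => 1 / L * (1 / ((j : ℝ) + 1) ^ 2)) (1 / L * (π ^ 2 / 6)) := by
    refine HasSum.mul_left _ ?_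
    have := (hasSum_nat_add_iff' (f := fun n : ℕ => 1 / (n : ℝ) ^ 2) 1).2 hasSum_zeta_two
    simpa using this
  have h3 : π ^ 2 / (6 * L) = 1 / L * (π ^ 2 / 6) := by field_simp
  rw [h3]
  refine hasSum_le (fun j => ?_) h1 h2
  rw [← Finset.sum_div, div_le_iff₀ (by positivity)]
  set s : ℝ := ((j : ℝ) + 1) * L with hs
  have hs0 : 0 < s := by positivity
  set y := Real.exp (-s) with hy
  have hy1 : y < 1 := by rw [hy, Real.exp_lt_one_iff]; linarith
  have hy0 : 0 < y := Real.exp_pos _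
  have hterm : ∀ k, (Real.exp (-L) ^ (k + 1)) ^ (j + 1) = y * y ^ k := by
    intro k
    rw [← pow_succ', pow_right_comm, ← Real.exp_nat_mul (-L) (j + 1), hy, hs]
    congr 2; push_cast; ring
  simp only [hterm]
  rw [← Finset.mul_sum]
  have hgeo : (∑ k ∈ range K, y ^ k) * (1 - y) ≤ 1 := by
    rw [geom_sum_mul_neg]
    have : 0 < y ^ K := by positivity
    linarith
  have hsy : s * y ≤ 1 - y := by
    have := Real.add_one_le_exp s
    have h : Real.exp s * y = 1 := by rw [hy, ← Real.exp_add]; simp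
    nlinarith
  have hS0 : 0 ≤ ∑ k ∈ range K, y ^ k := Finset.sum_nonneg fun k _ => by positivity
  have : 1 / L * (1 / ((j : ℝ) + 1) ^ 2) * ((j : ℝ) + 1) = 1 / s := by
    rw [hs]; field_simp
  rw [this, le_div_iff₀ hs0]
  nlinarith

/-- With `t` the relative frequency of `1`-bits, the empirical entropy is the code length under
the empirical distribution. -/
lemma empEnt_eq (x : ℕ → Bool) (a m : ℕ) :
    ∃ t ∈ Set.Icc (0 : ℝ) 1,
      0 < ∏ i ∈ range (m + 1), (if x (a + i + 1) = true then t else 1 - t) ∧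
      empEnt x a (a + (m + 1)) =
        -Real.logb 2 (∏ i ∈ range (m + 1), (if x (a + i + 1) = true then t else 1 - t)) := by
  set c := #{i ∈ range (m + 1) | x (a + i + 1) = true} with hc
  set d := #{i ∈ range (m + 1) | ¬ x (a + i + 1) = true} with hd
  have hcd : c + d = m + 1 := by
    rw [hc, hd, card_filter_add_card_filter_not, card_range]
  have hcard : #{i ∈ Icc (a + 1) (a + (m + 1)) | x i = true} = c := by
    rw [hc]
    symm
    refine card_bij (fun i _ => a + i + 1) ?_ ?_ ?_
    · intro i hi; simp at hi ⊢; exact ⟨by omega, hi.2⟩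
    · intro i _ j _ h; omega
    · intro b hb
      simp at hb
      refine ⟨b - (a + 1), ?_, by omega⟩
      have : a + (b - (a + 1)) + 1 = b := by omega
      simp [this, hb.2]; omega
  have hcdR : (c : ℝ) + d = m + 1 := by exact_mod_cast hcd
  have hm : (0 : ℝ) < m + 1 := by positivity
  set t : ℝ := c / (m + 1) with ht
  have ht1 : 1 - t = d / (m + 1) := by rw [ht]; field_simp; linarith
  have hprod : ∏ i ∈ range (m + 1), (if x (a + i + 1) = true then t else 1 - t) =
      t ^ c * (1 - t) ^ d := by
    rw [prod_ite, prod_const, prod_const]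
  have hpc : 0 < t ^ c := by
    rcases Nat.eq_zero_or_pos c with h | h
    · rw [h]; simp
    · have : (0 : ℝ) < c := by exact_mod_cast h
      rw [ht]; positivity
  have hpd : 0 < (1 - t) ^ d := by
    rcases Nat.eq_zero_or_pos d with h | h
    · rw [h]; simp
    · have : (0 : ℝ) < d := by exact_mod_cast h
      rw [ht1]; positivity
  refine ⟨t, ⟨by positivity, ?_⟩, by rw [hprod]; positivity, ?_⟩
  · have : 0 ≤ 1 - t := by rw [ht1]; positivity
    linarith
  · rw [hprod, Real.logb_mul hpc.ne' hpd.ne', Real.logb_pow, Real.logb_pow, empEnt, hcard]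
    have hba : ((a + (m + 1) : ℕ) : ℝ) - a = m + 1 := by push_cast; ring
    rw [hba, binEnt, ← ht]
    have e1 : (c : ℝ) = (m + 1) * t := by rw [ht]; field_simp
    have e2 : (d : ℝ) = (m + 1) * (1 - t) := by rw [ht1]; field_simp
    rw [e1, e2]; ring

/-- Bound on a single segment `(a, a + m + 1]`. -/
lemma segment_bound {L : ℝ} (hL : 0 < L) (hL2 : 1 / 2 ≤ Real.exp (-L))
    {p : Bool → ℝ} (hp0 : 0 < p false) (hple : p false ≤ p true)
    (hpsum : p false + p true = 1) (x : ℕ → Bool) (a m : ℕ) :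
    codeLen (fun _ => Real.exp (-L)) p x a (a + (m + 1)) - empEnt x a (a + (m + 1)) ≤
      (((a : ℝ) + m) * L + π ^ 2 / (6 * L)) * Real.logb 2 (Real.exp 1) +
        Real.logb 2 (1 / p false) := by
  have hlt : Real.exp (-L) < 1 := by rw [Real.exp_lt_one_iff]; linarith
  have hsum := sum_neg_log_le hL m
  set α := Real.exp (-L) with hα
  have hα0 : 0 < α := Real.exp_pos _
  obtain ⟨t, ht, hT, hent⟩ := empEnt_eq x a m
  have key := prod_espP_ge_Icc (x := x) hL2 hlt hp0 hple hpsum ht m a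
  set T := ∏ i ∈ range (m + 1), (if x (a + i + 1) = true then t else 1 - t)
  have hpos : ∀ i ∈ range (m + 1), espP (fun _ => α) p x (a + i) (x (a + i + 1)) ≠ 0 := by
    intro i _
    have h := espP_ge (x := x) hα0 hlt hple (a + i) (x (a + i + 1))
    have : 0 < α ^ (a + i) * p false := by positivity
    linarith
  have hcode : codeLen (fun _ => α) p x a (a + (m + 1)) =
      -Real.logb 2 (∏ i ∈ range (m + 1), espP (fun _ => α) p x (a + i) (x (a + i + 1))) := by
    rw [codeLen, Finset.sum_Ico_eq_sum_range, Real.logb_prod _ _ hpos, ← Finset.sum_neg_distrib,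
      Nat.add_sub_cancel_left]
  have hW : ∀ k ∈ range m, 0 < 1 - α ^ (k + 1) := fun k _ =>
    sub_pos.2 (pow_lt_one₀ hα0.le hlt (by omega))
  have hW0 : 0 < ∏ k ∈ range m, (1 - α ^ (k + 1)) := prod_pos hW
  have hl2 : 0 < Real.log 2 := Real.log_pos one_lt_two
  have hlog := Real.log_le_log (by positivity) key
  rw [Real.log_mul hT.ne' (by positivity), Real.log_mul (by positivity) hW0.ne',
    Real.log_mul (by positivity) hp0.ne', Real.log_pow, hα, Real.log_exp, ← hα,
    Real.log_prod fun k hk => (hW k hk).ne'] at hlog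
  rw [Finset.sum_neg_distrib] at hsum
  rw [hcode, hent]
  simp only [Real.logb, Real.log_exp, one_div, Real.log_inv]
  push_cast at hlog
  rw [← sub_nonneg]
  have : ∀ A B C D : ℝ, C * (Real.log 2)⁻¹ + -D / Real.log 2 - (-(A / Real.log 2) - -(B / Real.log 2))
      = (C - D + A - B) / Real.log 2 := by intros; field_simp; ring
  rw [this]
  exact div_nonneg (by linarith) hl2.le

lemma codeLen_partition (α : ℕ → ℝ) (p : Bool → ℝ) (x : ℕ → Bool) {n : ℕ} {S : Finset (ℕ × ℕ)}
    (hS : IsPartition S n) :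
    codeLen α p x 0 n = ∑ s ∈ S, codeLen α p x s.1 s.2 := by
  have hU : Ico 0 n = S.biUnion fun s => Ico s.1 s.2 := by
    ext i
    simp only [mem_Ico, mem_biUnion]
    constructor
    · rintro ⟨_, hi⟩
      obtain ⟨s, ⟨hs, h1, h2⟩, _⟩ := hS.2 (i + 1) (by omega) (by omega)
      exact ⟨s, hs, by omega, by omega⟩
    · rintro ⟨s, hs, h1, h2⟩
      have := (hS.1 s hs).2
      omega
  unfold codeLen
  rw [hU, sum_biUnion]
  intro s hs t ht hst
  refine disjoint_left.2 fun i hi hj => hst ?_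
  simp only [mem_Ico] at hi hj
  have := (hS.1 s hs).2
  exact (hS.2 (i + 1) (by omega) (by omega)).unique ⟨hs, by omega, by omega⟩ ⟨ht, by omega, by omega⟩

theorem stmt13 (n : ℕ) (hn : 5 ≤ n)
    (p : Bool → ℝ) (hp0 : 0 < p false) (hple : p false ≤ p true)
    (hpsum : p false + p true = 1)
    (x : ℕ → Bool) (S : Finset (ℕ × ℕ)) (hS : IsPartition S n) :
    codeLen (fun _ => Real.exp (-(π / Real.sqrt (6 * ((n : ℝ) - 1))))) p x 0 n -
        ∑ s ∈ S, empEnt x s.1 s.2 ≤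
      (S.card : ℝ) *
        ((2 * π * Real.logb 2 (Real.exp 1) / Real.sqrt 6) * Real.sqrt n +
          Real.logb 2 (1 / p false)) := by
  set r := Real.sqrt (6 * ((n : ℝ) - 1)) with hr
  have hn' : (5 : ℝ) ≤ n := by exact_mod_cast hn
  have hr2 : r ^ 2 = 6 * ((n : ℝ) - 1) := Real.sq_sqrt (by linarith)
  have hr48 : 4.8 ≤ r := Real.le_sqrt_of_sq_le (by norm_num; linarith)
  have hr0 : 0 < r := by linarith
  have hL : 0 < π / r := by positivity
  have hL2 : 1 / 2 ≤ Real.exp (-(π / r)) := by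
    have h1 : π / r ≤ Real.log 2 := by
      rw [div_le_iff₀ hr0]
      have := Real.pi_lt_d2
      have := Real.log_two_gt_d9
      nlinarith
    calc (1 / 2 : ℝ) = Real.exp (-Real.log 2) := by
          rw [Real.exp_neg, Real.exp_log two_pos, one_div]
      _ ≤ _ := Real.exp_le_exp.2 (by linarith)
  have hlog : 0 < Real.logb 2 (Real.exp 1) :=
    Real.logb_pos one_lt_two (by have := Real.add_one_le_exp (1 : ℝ); linarith)
  rw [codeLen_partition _ _ _ hS, ← Finset.sum_sub_distrib, ← nsmul_eq_mul]
  refine Finset.sum_le_card_nsmul _ _ _ fun s hs => ?_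
  obtain ⟨h1, h2⟩ := hS.1 s hs
  obtain ⟨m, hm⟩ : ∃ m, s.2 = s.1 + (m + 1) := ⟨s.2 - s.1 - 1, by omega⟩
  have hseg := segment_bound hL hL2 hp0 hple hpsum x s.1 m
  rw [← hm] at hseg
  refine hseg.trans (add_le_add_left ?_ _)
  have hmn : (s.1 : ℝ) + m ≤ n - 1 := by
    have : s.1 + m + 1 ≤ n := by omega
    have : (s.1 : ℝ) + m + 1 ≤ n := by exact_mod_cast this
    linarith
  have h6 : 0 < Real.sqrt 6 := by positivity
  have h66 : Real.sqrt 6 ^ 2 = 6 := Real.sq_sqrt (by norm_num)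
  have hrn : r ≤ Real.sqrt 6 * Real.sqrt n := by
    rw [← Real.sqrt_mul (by norm_num)]
    exact Real.sqrt_le_sqrt (by linarith)
  -- both `(n - 1) * L` and `π ^ 2 / (6 * L)` equal `π * r / 6` for `L = π / r`
  have hA : ((s.1 : ℝ) + m) * (π / r) ≤ π * r / 6 := by
    calc _ ≤ ((n : ℝ) - 1) * (π / r) := by gcongr
      _ = r ^ 2 / 6 * (π / r) := by rw [hr2]; ring
      _ = _ := by field_simp
  have hB : π ^ 2 / (6 * (π / r)) = π * r / 6 := by field_simp
  have hC : 2 * π / Real.sqrt 6 * Real.sqrt n = 2 * (π * (Real.sqrt 6 * Real.sqrt n) / 6) := by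
    field_simp
    rw [h66]
  have hD : π * r / 6 ≤ π * (Real.sqrt 6 * Real.sqrt n) / 6 := by gcongr
  calc _ ≤ (2 * π / Real.sqrt 6 * Real.sqrt n) * Real.logb 2 (Real.exp 1) := by
        gcongr
        rw [hB, hC]; linarith
    _ = _ := by ring
end

section
/- Let ESP = (α, p) be the exponential smoothing model with varying smoothing rates αₖ = exp(−π/√(12(k+1))) for k ≥ 1 (each of which exceeds 1/2) and initial distribution p with 0 < p(0) ≤ p(1). Then for any bit sequence x_{1:n} of length n ≥ 1 and any partition S of (0, n], ℓ(x_{1:n}; ESP) − ∑_{(a,b]∈S} h(x_{a+1:b}) ≤ |S|·[ log₂(1/p(0)) + (2π·log₂ e/√3)·√n ]. -/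
/-!
The redundancy is bounded segment by segment, by a potential argument. Write `α k = exp (-ε k)`, let
`r k` be the model's probability of a `1` after `k` bits, and compare, in nats, with a fixed
Bernoulli source of parameter `q ∈ (0, 1)`.

In the limit of small rates the update is the flow `dp/ds = 1 - p` on bit `1` and `dp/ds = -p` on
bit `0`. A function `G` of `p` pays for the regret of that flow as soon as
`log ((1 - q) / (1 - p)) / p ≤ G' p ≤ log (p / q) / (1 - p)`. Taking the expression of smaller
absolute value on each side of `q`, with `G q = 0`, gives `0 ≤ G ≤ ∫₀¹ -log (1 - t) / t = π² / 6`
uniformly in `q` (`pot`, `pot_nonneg_of_le`, `pot_le`).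

One discrete step with rate `exp (-ε)` is the flow run for time `ε`. Along it `G` grows by at most
`ε * log (p' / q)`, where `p'` is the probability after the update (`pot_step`), whereas
`ε * log (p / q)` would be needed. Adding the barrier `-log (p (1 - p))` to `G / ε` replaces `p'`
by `p` at a price of exactly `ε` per step (`redundancy_step`).

Since `ε k` decreases and `0 ≤ G ≤ π² / 6`, these inequalities telescope (`segment_telescope`). The
barrier at the start of a segment `(a, b]` is at most `log (1 / p 0) + ∑ k ≤ a, ε k + log 2`, because
each update multiplies a probability by at least `α k`. The total for the segment is therefore
`log (1 / p 0) + π² / (6 ε b) + ∑ k ≤ b, ε k` (`segment_entropy`), where `q` is the empirical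
frequency, approached by a limit when that is `0` or `1`. For `ε k = π / √(12 (k + 1))` the last two
terms are together at most `2 π √n / √3` (`rate_bound`).
-/

open Finset Real

/-! ### The potential -/

/-- Derivative in `t` of the potential with comparator `q`: `log ((1 - q) / (1 - t)) / t` for
`t ≥ q`, and `log (t / q) / (1 - t)` for `t ≤ q`. The two cases agree at `t = q`, and writing them
with `max` and `min` makes continuity on `(0, 1)` immediate. -/
noncomputable def potSlope (q t : ℝ) : ℝ :=
  max 0 (Real.log ((1 - q) / (1 - t))) / t + min 0 (Real.log (t / q)) / (1 - t)

/-- Potential of the probability `p` of a `1`, relative to the comparator `q`: the primitive of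
`potSlope q` that vanishes at `q`. -/
noncomputable def pot (q p : ℝ) : ℝ := ∫ t in q..p, potSlope q t

lemma continuousOn_potSlope {q : ℝ} (hq0 : 0 < q) (hq1 : q < 1) :
    ContinuousOn (potSlope q) (Set.Ioo 0 1) := by
  unfold potSlope
  have h1 : ∀ t ∈ Set.Ioo (0 : ℝ) 1, 1 - t ≠ 0 := fun t ht => by linarith [ht.2]
  have h0 : ∀ t ∈ Set.Ioo (0 : ℝ) 1, t ≠ 0 := fun t ht => ht.1.ne'
  have hq : 1 - q ≠ 0 := by linarith
  refine ContinuousOn.add (ContinuousOn.div (ContinuousOn.sup continuousOn_const ?_) continuousOn_id h0)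
    (ContinuousOn.div (ContinuousOn.inf continuousOn_const ?_) (by fun_prop) h1)
  · refine ContinuousOn.log (continuousOn_const.div (by fun_prop) h1) ?_
    intro t ht
    exact div_ne_zero hq (h1 t ht)
  · refine ContinuousOn.log (by fun_prop) ?_
    intro t ht
    exact div_ne_zero (h0 t ht) hq0.ne'

lemma uIcc_subset_unit {a b : ℝ} (ha0 : 0 < a) (ha1 : a < 1) (hb0 : 0 < b) (hb1 : b < 1) :
    Set.uIcc a b ⊆ Set.Ioo 0 1 := by
  intro t ht
  rw [Set.mem_uIcc] at ht
  constructor <;> rcases ht with h | h <;> linarith [h.1, h.2]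

lemma hasDerivAt_pot {q p : ℝ} (hq0 : 0 < q) (hq1 : q < 1) (hp0 : 0 < p) (hp1 : p < 1) :
    HasDerivAt (pot q) (potSlope q p) p := by
  have hc := continuousOn_potSlope hq0 hq1
  exact intervalIntegral.integral_hasDerivAt_right
    ((hc.mono (uIcc_subset_unit hq0 hq1 hp0 hp1)).intervalIntegrable)
    (hc.stronglyMeasurableAtFilter isOpen_Ioo p ⟨hp0, hp1⟩)
    (hc.continuousAt (isOpen_Ioo.mem_nhds ⟨hp0, hp1⟩))

/-- Along the flow `dp/ds = 1 - p` the potential grows at rate at most `log (p / q)`. For `t ≤ q` this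
is an equality; for `t ≥ q` both sides are separated by `1 - q / t`. -/
lemma one_sub_mul_potSlope_le {q t : ℝ} (hq0 : 0 < q) (hq1 : q < 1) (ht0 : 0 < t) (ht1 : t < 1) :
    (1 - t) * potSlope q t ≤ Real.log (t / q) := by
  have h1t : 0 < 1 - t := by linarith
  have h1q : 0 < 1 - q := by linarith
  unfold potSlope
  rcases le_total q t with h | h
  · have hlog : 0 ≤ Real.log (t / q) := Real.log_nonneg (by rwa [one_le_div hq0])
    have hA : Real.log ((1 - q) / (1 - t)) ≤ (1 - q) / (1 - t) - 1 :=
      Real.log_le_sub_one_of_pos (by positivity)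
    have hB : 1 - (t / q)⁻¹ ≤ Real.log (t / q) := Real.one_sub_inv_le_log_of_pos (by positivity)
    have hA0 : 0 ≤ Real.log ((1 - q) / (1 - t)) :=
      Real.log_nonneg (by rw [one_le_div h1t]; linarith)
    rw [min_eq_left hlog, max_eq_right hA0, zero_div, add_zero]
    calc (1 - t) * (Real.log ((1 - q) / (1 - t)) / t)
        ≤ (1 - t) * (((1 - q) / (1 - t) - 1) / t) := by gcongr
      _ = 1 - (t / q)⁻¹ := by field_simp; ring
      _ ≤ _ := hB
  · have hlog : Real.log (t / q) ≤ 0 :=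
      Real.log_nonpos (by positivity) (by rwa [div_le_one hq0])
    have hA0 : Real.log ((1 - q) / (1 - t)) ≤ 0 :=
      Real.log_nonpos (by positivity) (by rw [div_le_one h1t]; linarith)
    rw [min_eq_right hlog, max_eq_left hA0, zero_div, zero_add]
    field_simp
    exact le_rfl

/-- Exchanging the roles of the two bits exchanges the two branches. -/
lemma potSlope_symm (q t : ℝ) : potSlope (1 - q) (1 - t) = -potSlope q t := by
  unfold potSlope
  have e1 : Real.log (q / t) = -Real.log (t / q) := by rw [← Real.log_inv, inv_div]
  have e2 : Real.log ((1 - t) / (1 - q)) = -Real.log ((1 - q) / (1 - t)) := by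
    rw [← Real.log_inv, inv_div]
  rw [sub_sub_cancel, sub_sub_cancel, e1, e2]
  have m1 : ∀ y : ℝ, max 0 (-y) = -min 0 y := fun y => by rw [← neg_zero, max_neg_neg, neg_zero]
  have m2 : ∀ y : ℝ, min 0 (-y) = -max 0 y := fun y => by rw [← neg_zero, min_neg_neg, neg_zero]
  rw [m1, m2]
  ring

lemma pot_symm (q p : ℝ) : pot (1 - q) (1 - p) = pot q p := by
  unfold pot
  rw [intervalIntegral.integral_symm, ← intervalIntegral.integral_comp_sub_left]
  simp only [potSlope_symm, intervalIntegral.integral_neg, neg_neg]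

/-- For `q ≤ p` the integrand is at most `-log (1 - t) / t = ∑ t ^ n / (n + 1)`, whose integral over
`[0, 1]` is `∑ 1 / (n + 1) ^ 2`. -/
lemma pot_le_of_le {q p : ℝ} (hq0 : 0 < q) (hqp : q ≤ p) (hp1 : p < 1) :
    pot q p ≤ π ^ 2 / 6 := by
  let f : ℕ → C(ℝ, ℝ) := fun n => ⟨fun t => t ^ n / (n + 1), by fun_prop⟩
  have hp0 : 0 < p := by linarith
  have hint : ∀ n : ℕ, ∫ t in q..p, f n t ≤ 1 / ((n + 1 : ℕ) : ℝ) ^ 2 := by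
    intro n
    have : ∫ t in q..p, f n t = (p ^ (n + 1) - q ^ (n + 1)) / (n + 1) / (n + 1) := by
      simp only [f, ContinuousMap.coe_mk, intervalIntegral.integral_div, integral_pow]
    rw [this, div_div]
    push_cast
    rw [← pow_two]
    gcongr
    have := pow_le_one₀ hp0.le hp1.le (n := n + 1)
    have : 0 ≤ q ^ (n + 1) := by positivity
    linarith
  have hsum : Summable fun n =>
      ‖ContinuousMap.restrict (↑(⟨Set.uIcc q p, isCompact_uIcc⟩ : TopologicalSpace.Compacts ℝ))
        (f n)‖ := by
    refine Summable.of_nonneg_of_le (fun _ => norm_nonneg _) (fun n => ?_)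
      (summable_geometric_of_lt_one hp0.le hp1)
    rw [ContinuousMap.norm_le _ (by positivity)]
    rintro ⟨t, ht⟩
    have ht' : t ∈ Set.Icc q p := by
      have : t ∈ Set.uIcc q p := ht
      rwa [Set.uIcc_of_le hqp] at this
    have ht0 : 0 ≤ t := by linarith [ht'.1]
    simp only [ContinuousMap.restrict_apply, f, ContinuousMap.coe_mk]
    rw [Real.norm_of_nonneg (by positivity)]
    calc t ^ n / (n + 1) ≤ t ^ n := div_le_self (by positivity) (by linarith [n.cast_nonneg (α := ℝ)])
      _ ≤ p ^ n := by gcongr; exact ht'.2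
  have hs := intervalIntegral.hasSum_intervalIntegral_of_summable_norm hsum
  have htsum : ∀ t ∈ Set.Icc q p, ∑' n, f n t = -Real.log (1 - t) / t := by
    intro t ht
    have ht0 : 0 < t := by linarith [ht.1]
    have ht1 : t < 1 := by linarith [ht.2]
    have h := (Real.hasSum_pow_div_log_of_abs_lt_one (x := t)
      (by rw [abs_of_pos ht0]; exact ht1)).div_const t
    rw [← h.tsum_eq]
    refine tsum_congr fun n => ?_
    simp only [f, ContinuousMap.coe_mk]
    field_simp
    ring
  have hcongr : ∫ t in q..p, ∑' n, f n t = ∫ t in q..p, -Real.log (1 - t) / t :=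
    intervalIntegral.integral_congr fun t ht => htsum t (by rwa [Set.uIcc_of_le hqp] at ht)
  have hz : HasSum (fun n : ℕ => 1 / ((n + 1 : ℕ) : ℝ) ^ 2) (π ^ 2 / 6) := by
    have := (hasSum_nat_add_iff' 1).mpr hasSum_zeta_two
    simpa using this
  have hq1 : q < 1 := by linarith
  have hsub := uIcc_subset_unit hq0 hq1 hp0 hp1
  calc pot q p ≤ ∫ t in q..p, -Real.log (1 - t) / t := by
        refine intervalIntegral.integral_mono_on hqp
          (((continuousOn_potSlope hq0 hq1).mono hsub).intervalIntegrable) ?_ ?_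
        · refine ContinuousOn.intervalIntegrable (ContinuousOn.mono ?_ hsub)
          refine ContinuousOn.div (ContinuousOn.neg (ContinuousOn.log (by fun_prop) ?_))
            continuousOn_id fun t ht => ht.1.ne'
          intro t ht
          linarith [ht.2]
        · intro t ht
          have ht0 : 0 < t := by linarith [ht.1]
          have ht1 : 0 < 1 - t := by linarith [ht.2]
          have h1q : 0 < 1 - q := by linarith
          unfold potSlope
          rw [min_eq_left (Real.log_nonneg (by rw [one_le_div hq0]; exact ht.1)), zero_div,
            add_zero, max_eq_right (Real.log_nonneg (by rw [one_le_div ht1]; linarith [ht.1])),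
            Real.log_div h1q.ne' ht1.ne']
          gcongr
          have := Real.log_nonpos h1q.le (by linarith)
          linarith
    _ = ∫ t in q..p, ∑' n, f n t := hcongr.symm
    _ ≤ π ^ 2 / 6 := hasSum_le hint hs hz

lemma pot_le {q p : ℝ} (hq0 : 0 < q) (hq1 : q < 1) (hp0 : 0 < p) (hp1 : p < 1) :
    pot q p ≤ π ^ 2 / 6 := by
  rcases le_total q p with h | h
  · exact pot_le_of_le hq0 h hp1
  · rw [← pot_symm]
    exact pot_le_of_le (by linarith) (by linarith) (by linarith)

lemma pot_nonneg_of_le {q p : ℝ} (hq0 : 0 < q) (hqp : q ≤ p) (hp1 : p < 1) : 0 ≤ pot q p := by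
  refine intervalIntegral.integral_nonneg hqp fun t ht => ?_
  have ht0 : 0 < t := by linarith [ht.1]
  have ht1 : 0 < 1 - t := by linarith [ht.2]
  unfold potSlope
  rw [min_eq_left (Real.log_nonneg (by rw [one_le_div hq0]; exact ht.1))]
  have := le_max_left 0 (Real.log ((1 - q) / (1 - t)))
  positivity

/-! ### Redundancy of a single step -/

/-- Effect of observing a `1` with smoothing rate `exp (-ε)`: the update is the flow
`s ↦ 1 - exp (-s) * (1 - p)` at time `ε`, and the growth rate `log (p_s / q)` of the potential along
it is largest at the end of the step. -/
lemma pot_step {q p ε : ℝ} (hq0 : 0 < q) (hq1 : q < 1) (hp0 : 0 < p) (hp1 : p < 1)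
    (hε : 0 < ε) :
    pot q (1 - Real.exp (-ε) * (1 - p)) - pot q p
      ≤ ε * Real.log ((1 - Real.exp (-ε) * (1 - p)) / q) := by
  let c : ℝ → ℝ := fun s => 1 - Real.exp (-s) * (1 - p)
  have h1p : 0 < 1 - p := by linarith
  have hc0 : ∀ s, 0 ≤ s → 0 < c s := fun s hs => by
    have : Real.exp (-s) ≤ 1 := Real.exp_le_one_iff.2 (by linarith)
    have : Real.exp (-s) * (1 - p) ≤ 1 * (1 - p) := by gcongr
    simp only [c]; linarith
  have hc1 : ∀ s, c s < 1 := fun s => by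
    have : 0 < Real.exp (-s) * (1 - p) := by positivity
    simp only [c]; linarith
  have hder : ∀ s, 0 ≤ s → HasDerivAt (fun s => pot q (c s)) ((1 - c s) * potSlope q (c s)) s := by
    intro s hs
    have h1 : HasDerivAt c (1 - c s) s := by
      have h2 := (((hasDerivAt_id s).neg.exp).mul_const (1 - p)).const_sub 1
      refine h2.congr_deriv ?_
      simp [c]
    have h3 := (hasDerivAt_pot hq0 hq1 (hc0 s hs) (hc1 s)).comp s h1
    rw [mul_comm]
    exact h3
  have key := Convex.image_sub_le_mul_sub_of_deriv_le (convex_Icc (0 : ℝ) ε)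
    (f := fun s => pot q (c s))
    (fun s hs => (hder s hs.1).continuousAt.continuousWithinAt)
    (fun s hs => by
      rw [interior_Icc] at hs
      exact (hder s hs.1.le).differentiableAt.differentiableWithinAt)
    (C := Real.log (c ε / q))
    (fun s hs => by
      rw [interior_Icc] at hs
      rw [(hder s hs.1.le).deriv]
      refine (one_sub_mul_potSlope_le hq0 hq1 (hc0 s hs.1.le) (hc1 s)).trans ?_
      have := hc0 s hs.1.le
      refine Real.log_le_log (by positivity) ?_
      have : Real.exp (-ε) * (1 - p) ≤ Real.exp (-s) * (1 - p) := by
        gcongr; exact hs.2.le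
      have : c s ≤ c ε := by simp only [c]; linarith
      gcongr)
    0 ⟨le_rfl, hε.le⟩ ε ⟨hε.le, le_rfl⟩ hε.le
  have e0 : c 0 = p := by simp [c]
  rw [sub_zero, mul_comm] at key
  simpa only [e0] using key

/-- Regret of predicting a bit `1` with probability `p` instead of `q`. The barrier
`-log (p * (1 - p))` changes by `ε` minus `log (p' / p)`, which turns the `log (p' / q)` of
`pot_step` into `log (p / q)`. -/
lemma redundancy_step {q p ε : ℝ} (hq0 : 0 < q) (hq1 : q < 1) (hp0 : 0 < p) (hp1 : p < 1)
    (hε : 0 < ε) {p' : ℝ} (hp' : p' = 1 - Real.exp (-ε) * (1 - p)) :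
    -Real.log p + Real.log q ≤ (pot q p - pot q p') / ε
      + (-Real.log (p * (1 - p)) - -Real.log (p' * (1 - p'))) + ε := by
  have h1p : 0 < 1 - p := by linarith
  have hs := pot_step hq0 hq1 hp0 hp1 hε
  rw [← hp'] at hs
  have hp'1 : 1 - p' = Real.exp (-ε) * (1 - p) := by rw [hp']; ring
  have hp'0 : 0 < p' := by
    have : Real.exp (-ε) ≤ 1 := Real.exp_le_one_iff.2 (by linarith)
    have : Real.exp (-ε) * (1 - p) ≤ 1 * (1 - p) := by gcongr
    linarith
  rw [Real.log_div hp'0.ne' hq0.ne'] at hs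
  rw [hp'1, Real.log_mul hp0.ne' h1p.ne', Real.log_mul hp'0.ne' (by positivity),
    Real.log_mul (by positivity) h1p.ne', Real.log_exp]
  have : -(Real.log p' - Real.log q) ≤ (pot q p - pot q p') / ε := by
    rw [le_div_iff₀ hε]; linarith
  linarith

/-! ### Redundancy of a segment -/

section Model

variable {ε : ℕ → ℝ} {p : Bool → ℝ} {x : ℕ → Bool}

lemma espP_add (α : ℕ → ℝ) (hpsum : p false + p true = 1) (k : ℕ) :
    espP α p x k false + espP α p x k true = 1 := by
  induction k with
  | zero => exact hpsum
  | succ k ih =>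
    simp only [espP]
    cases x (k + 1) <;> simp <;> linear_combination α (k + 1) * ih

lemma espP_lower (hε : ∀ k, 0 < ε k) {c : ℝ} (hc : ∀ y, c ≤ p y) (k : ℕ) (y : Bool) :
    Real.exp (-∑ i ∈ range k, ε (i + 1)) * c ≤ espP (fun k => Real.exp (-ε k)) p x k y := by
  induction k with
  | zero => simpa [espP] using hc y
  | succ k ih =>
    have h1 : Real.exp (-ε (k + 1)) ≤ 1 := Real.exp_le_one_iff.2 (by linarith [hε (k + 1)])
    have h2 : Real.exp (-∑ i ∈ range (k + 1), ε (i + 1)) * c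
        ≤ Real.exp (-ε (k + 1)) * espP (fun k => Real.exp (-ε k)) p x k y := by
      rw [sum_range_succ, neg_add_rev, Real.exp_add, mul_assoc]
      gcongr
    simp only [espP]
    split_ifs <;> linarith

lemma espP_pos (hε : ∀ k, 0 < ε k) (hp : ∀ y, 0 < p y) (k : ℕ) (y : Bool) :
    0 < espP (fun k => Real.exp (-ε k)) p x k y := by
  have hc : ∀ z, min (p false) (p true) ≤ p z := by
    intro z; cases z
    · exact min_le_left _ _
    · exact min_le_right _ _
  refine lt_of_lt_of_le ?_ (espP_lower hε hc k y)
  have := lt_min (hp false) (hp true)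
  positivity

/-- `redundancy_step` for either bit; a `0` is reduced to a `1` by the symmetry `pot_symm`. -/
lemma espP_redundancy_step (hε : ∀ k, 0 < ε k) (hp : ∀ y, 0 < p y)
    (hpsum : p false + p true = 1) {q : ℝ} (hq0 : 0 < q) (hq1 : q < 1) (k : ℕ) {r : ℕ → ℝ}
    (hr : ∀ k, r k = espP (fun k => Real.exp (-ε k)) p x k true) :
    -Real.log (espP (fun k => Real.exp (-ε k)) p x k (x (k + 1)))
        + (if x (k + 1) = true then Real.log q else Real.log (1 - q))
      ≤ (pot q (r k) - pot q (r (k + 1))) / ε (k + 1)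
        + (-Real.log (r k * (1 - r k)) - -Real.log (r (k + 1) * (1 - r (k + 1))))
        + ε (k + 1) := by
  have hadd := espP_add (x := x) (fun k => Real.exp (-ε k)) hpsum k
  have hf : espP (fun k => Real.exp (-ε k)) p x k false = 1 - r k := by rw [hr]; linarith
  have hr0 : 0 < r k := by rw [hr]; exact espP_pos hε hp k true
  have hr1 : r k < 1 := by
    have := espP_pos (x := x) hε hp k false
    linarith
  have hsucc : r (k + 1) = if true = x (k + 1) then
      Real.exp (-ε (k + 1)) * r k + (1 - Real.exp (-ε (k + 1)))
      else Real.exp (-ε (k + 1)) * r k := by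
    simp only [hr, espP]
  cases hx : x (k + 1)
  · rw [hx] at hsucc
    simp only [Bool.true_eq_false, if_false, Bool.false_eq_true] at hsucc ⊢
    rw [hf]
    have := redundancy_step (q := 1 - q) (p := 1 - r k) (p' := 1 - r (k + 1))
      (by linarith) (by linarith) (by linarith) (by linarith) (hε (k + 1))
      (by rw [hsucc, sub_sub_cancel])
    rw [pot_symm, pot_symm, sub_sub_cancel, sub_sub_cancel, mul_comm (1 - r k),
      mul_comm (1 - r (k + 1))] at this
    exact this
  · rw [hx] at hsucc
    simp only [if_true] at hsucc ⊢
    rw [← hr]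
    exact redundancy_step hq0 hq1 hr0 hr1 (hε (k + 1)) (by rw [hsucc]; ring)

/-- Sum of the one-step bounds. The remainder `(π² / 6 - pot) / ε b` is kept rather than `-pot / ε b`
so that replacing `ε b` by the smaller `ε (b + 1)` only increases the bound. -/
lemma segment_telescope (hε : ∀ k, 0 < ε k) (hanti : Antitone ε) (hp : ∀ y, 0 < p y)
    (hpsum : p false + p true = 1) {q : ℝ} (hq0 : 0 < q) (hq1 : q < 1) {r : ℕ → ℝ}
    (hr : ∀ k, r k = espP (fun k => Real.exp (-ε k)) p x k true) {a b : ℕ} (hab : a ≤ b) :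
    ∑ k ∈ Ico a b, (-Real.log (espP (fun k => Real.exp (-ε k)) p x k (x (k + 1)))
        + (if x (k + 1) = true then Real.log q else Real.log (1 - q)))
      ≤ (π ^ 2 / 6 - pot q (r b)) / ε b
        + (-Real.log (r a * (1 - r a)) - -Real.log (r b * (1 - r b)))
        + ∑ k ∈ Ico a b, ε (k + 1) := by
  have hle : ∀ k, 0 ≤ π ^ 2 / 6 - pot q (r k) := fun k => by
    have hadd := espP_add (x := x) (fun k => Real.exp (-ε k)) hpsum k
    have h1 := espP_pos (x := x) hε hp k false
    have h2 := espP_pos (x := x) hε hp k true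
    have := pot_le (p := r k) hq0 hq1 (by rw [hr]; exact h2) (by rw [hr]; linarith)
    linarith
  induction b, hab using Nat.le_induction with
  | base =>
    have := div_nonneg (hle a) (hε a).le
    simpa using this
  | succ b hab ih =>
    rw [sum_Ico_succ_top hab, sum_Ico_succ_top hab]
    have hstep := espP_redundancy_step (x := x) hε hp hpsum hq0 hq1 b hr
    have hmono : (π ^ 2 / 6 - pot q (r b)) / ε b ≤ (π ^ 2 / 6 - pot q (r b)) / ε (b + 1) :=
      div_le_div_of_nonneg_left (hle b) (hε (b + 1)) (hanti b.le_succ)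
    have e : (π ^ 2 / 6 - pot q (r (b + 1))) / ε (b + 1)
        = (π ^ 2 / 6 - pot q (r b)) / ε (b + 1)
          + (pot q (r b) - pot q (r (b + 1))) / ε (b + 1) := by
      rw [← add_div]; congr 1; ring
    rw [e]
    linarith

lemma half_le_mul_one_sub {c r : ℝ} (h1 : c ≤ r) (h2 : c ≤ 1 - r) (hc : 0 < c) :
    c / 2 ≤ r * (1 - r) := by
  rcases le_total r (1 / 2) with h | h <;> nlinarith

/-- Redundancy in nats relative to a Bernoulli source with parameter `q`; the bound is uniform in
`q`. The rates before the segment enter through the lower bound on the probabilities at its start. -/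
lemma segment_comparator (hε : ∀ k, 0 < ε k) (hanti : Antitone ε) {c : ℝ} (hc0 : 0 < c)
    (hc : ∀ y, c ≤ p y) (hpsum : p false + p true = 1) {q : ℝ} (hq0 : 0 < q) (hq1 : q < 1)
    {a b : ℕ} (hab : a ≤ b) :
    ∑ k ∈ Ico a b, -Real.log (espP (fun k => Real.exp (-ε k)) p x k (x (k + 1)))
        + ∑ k ∈ Ico a b, (if x (k + 1) = true then Real.log q else Real.log (1 - q))
      ≤ -Real.log c + π ^ 2 / 6 / ε b + ∑ k ∈ range b, ε (k + 1) := by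
  have hp : ∀ y, 0 < p y := fun y => hc0.trans_le (hc y)
  let r : ℕ → ℝ := fun k => espP (fun k => Real.exp (-ε k)) p x k true
  have hT := segment_telescope hε hanti hp hpsum hq0 hq1 (r := r) (fun k => rfl) hab (x := x)
  rw [sum_add_distrib] at hT
  have hf : ∀ k, espP (fun k => Real.exp (-ε k)) p x k false = 1 - r k := fun k => by
    have := espP_add (x := x) (fun k => Real.exp (-ε k)) hpsum k
    simp only [r]; linarith
  have hr0 : ∀ k, 0 < r k := fun k => espP_pos hε hp k true
  have hr1 : ∀ k, 0 < 1 - r k := fun k => by rw [← hf]; exact espP_pos hε hp k false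
  have hpot : 0 ≤ pot q (r b) := by
    rcases le_total q (r b) with h | h
    · exact pot_nonneg_of_le hq0 h (by linarith [hr1 b])
    · rw [← pot_symm]
      exact pot_nonneg_of_le (by linarith) (by linarith) (by linarith [hr0 b])
  have h1 : (π ^ 2 / 6 - pot q (r b)) / ε b ≤ π ^ 2 / 6 / ε b := by
    have := hε b
    gcongr
    linarith
  -- As `r (1 - r) ≤ 1/4 ≤ 1/2`, the final barrier compensates the `log 2` lost in `h3`.
  have h2 : Real.log (r b * (1 - r b)) ≤ -Real.log 2 := by
    rw [← Real.log_inv]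
    refine Real.log_le_log (mul_pos (hr0 b) (hr1 b)) ?_
    nlinarith [sq_nonneg (r b - 1 / 2)]
  have h3 : -Real.log (r a * (1 - r a))
      ≤ -Real.log c + ∑ k ∈ range a, ε (k + 1) + Real.log 2 := by
    have hlow := half_le_mul_one_sub (espP_lower (x := x) hε hc a true)
      (by have := espP_lower (x := x) hε hc a false; rw [hf] at this; exact this)
      (by positivity)
    have := Real.log_le_log (by positivity) hlow
    rw [Real.log_div (by positivity) two_ne_zero, Real.log_mul (by positivity) hc0.ne',
      Real.log_exp] at this
    simp only [r]
    linarith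
  have h4 := sum_range_add_sum_Ico (fun k => ε (k + 1)) hab
  linarith

lemma sum_comparator {a b : ℕ} (u v : ℝ) :
    ∑ k ∈ Ico a b, (if x (k + 1) = true then u else v)
      = (#{i ∈ Icc (a + 1) b | x i = true} : ℝ) * u
        + (#{i ∈ Icc (a + 1) b | ¬ x i = true} : ℝ) * v := by
  rw [sum_Ico_add' (fun i => if x i = true then u else v) a b 1, ← Finset.Ico_add_one_right_eq_Icc,
    sum_ite, sum_const, sum_const, nsmul_eq_mul, nsmul_eq_mul]

/-- The comparator with `q` the empirical frequency of `1`. Constant segments have frequency `0` or `1`,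
outside the admissible range of `q`, and are reached as limits. -/
lemma segment_entropy (hε : ∀ k, 0 < ε k) (hanti : Antitone ε) {c : ℝ} (hc0 : 0 < c)
    (hc : ∀ y, c ≤ p y) (hpsum : p false + p true = 1) {a b : ℕ} (hab : a < b) :
    Real.log 2 * (codeLen (fun k => Real.exp (-ε k)) p x a b - empEnt x a b)
      ≤ -Real.log c + π ^ 2 / 6 / ε b + ∑ k ∈ range b, ε (k + 1) := by
  have hmain := fun q hq0 hq1 =>
    segment_comparator (x := x) hε hanti hc0 hc hpsum (q := q) hq0 hq1 hab.le
  set C := -Real.log c + π ^ 2 / 6 / ε b + ∑ k ∈ range b, ε (k + 1)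
  have hl2 : Real.log 2 ≠ 0 := (Real.log_pos one_lt_two).ne'
  have hcode : Real.log 2 * codeLen (fun k => Real.exp (-ε k)) p x a b
      = ∑ k ∈ Ico a b, -Real.log (espP (fun k => Real.exp (-ε k)) p x k (x (k + 1))) := by
    rw [codeLen, mul_sum]
    refine sum_congr rfl fun i _ => ?_
    rw [Real.logb]; field_simp
  rw [← hcode] at hmain
  simp only [sum_comparator] at hmain
  have hcard : (#{i ∈ Icc (a + 1) b | x i = true} : ℝ) + (#{i ∈ Icc (a + 1) b | ¬ x i = true} : ℝ)
      = (b : ℝ) - a := by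
    have := card_filter_add_card_filter_not (s := Icc (a + 1) b) (fun i => x i = true)
    rw [Nat.card_Icc] at this
    rw [← Nat.cast_add, this, ← Nat.cast_sub hab.le]
    congr 1; omega
  rw [mul_sub, empEnt]
  generalize #{i ∈ Icc (a + 1) b | x i = true} = m₁ at *
  generalize #{i ∈ Icc (a + 1) b | ¬ x i = true} = m₀ at *
  generalize Real.log 2 * codeLen (fun k => Real.exp (-ε k)) p x a b = X at *
  have hL : 0 < (b : ℝ) - a := by
    have : (a : ℝ) < b := by exact_mod_cast hab
    linarith
  have hent : Real.log 2 * (((b : ℝ) - a) * binEnt (m₁ / ((b : ℝ) - a)))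
      = -(m₁ * Real.log (m₁ / ((b : ℝ) - a)) + m₀ * Real.log (1 - m₁ / ((b : ℝ) - a))) := by
    have hm0 : (m₀ : ℝ) = ((b : ℝ) - a) - m₁ := by linarith
    rw [hm0, binEnt, Real.logb, Real.logb]
    field_simp
    ring
  rw [hent]
  have hlim : Filter.Tendsto (fun q : ℝ => Real.log (1 - q)) (nhdsWithin 0 (Set.Ioi 0))
      (nhds 0) := by
    have : ContinuousAt (fun q : ℝ => Real.log (1 - q)) 0 :=
      ContinuousAt.log (by fun_prop) (by norm_num)
    have h := this.tendsto.mono_left (nhdsWithin_le_nhds (s := Set.Ioi 0))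
    simpa using h
  have hev : ∀ᶠ q : ℝ in nhdsWithin 0 (Set.Ioi 0), 0 < q ∧ q < 1 :=
    Ioo_mem_nhdsGT one_pos
  rcases Nat.eq_zero_or_pos m₁ with h1 | h1
  · subst h1
    have hle : X ≤ C := by
      have ht : Filter.Tendsto (fun q : ℝ => X + m₀ * Real.log (1 - q))
          (nhdsWithin 0 (Set.Ioi 0)) (nhds X) := by
        simpa using (hlim.const_mul (m₀ : ℝ)).const_add X
      refine le_of_tendsto ht (hev.mono fun q hq => ?_)
      simpa using hmain q hq.1 hq.2
    simpa using hle
  rcases Nat.eq_zero_or_pos m₀ with h0 | h0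
  · subst h0
    have hle : X ≤ C := by
      have ht : Filter.Tendsto (fun q : ℝ => X + m₁ * Real.log (1 - q))
          (nhdsWithin 0 (Set.Ioi 0)) (nhds X) := by
        simpa using (hlim.const_mul (m₁ : ℝ)).const_add X
      refine le_of_tendsto ht (hev.mono fun q hq => ?_)
      simpa using hmain (1 - q) (by linarith [hq.2]) (by linarith [hq.1])
    have : (m₁ : ℝ) / ((b : ℝ) - a) = 1 := by
      rw [← hcard]; simp [h1.ne']
    simpa [this] using hle
  · have h1' : (0 : ℝ) < m₁ := by exact_mod_cast h1
    have h0' : (0 : ℝ) < m₀ := by exact_mod_cast h0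
    have := hmain (m₁ / ((b : ℝ) - a)) (by positivity) (by rw [div_lt_one hL]; linarith)
    linarith

end Model

lemma sum_inv_sqrt_le (b : ℕ) :
    ∑ k ∈ range b, 1 / √((k : ℝ) + 2) ≤ 2 * √((b : ℝ) + 1) - 2 := by
  induction b with
  | zero => simp
  | succ b ih =>
    rw [sum_range_succ]
    push_cast
    rw [show (b : ℝ) + 1 + 1 = b + 2 by ring]
    have h1 : 0 < √((b : ℝ) + 2) := by positivity
    have e1 : √((b : ℝ) + 2) ^ 2 = b + 2 := Real.sq_sqrt (by positivity)
    have e2 : √((b : ℝ) + 1) ^ 2 = b + 1 := Real.sq_sqrt (by positivity)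
    have : 1 / √((b : ℝ) + 2) ≤ 2 * (√((b : ℝ) + 2) - √((b : ℝ) + 1)) := by
      rw [div_le_iff₀ h1]
      nlinarith [sq_nonneg (√((b : ℝ) + 2) - √((b : ℝ) + 1))]
    linarith

/-- Both terms are multiples of `π / √12`: the first is `2 √(b + 1)` of them, the second at most
`2 √(b + 1) - 2`, and `4 √(b + 1) - 2 ≤ 4 √b` for `b ≥ 1`. -/
lemma rate_bound {b n : ℕ} (hb : 1 ≤ b) (hbn : b ≤ n) :
    π ^ 2 / 6 / (π / √(12 * ((b : ℝ) + 1)))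
        + ∑ k ∈ range b, π / √(12 * (((k + 1 : ℕ) : ℝ) + 1))
      ≤ 2 * π / √3 * √n := by
  have h12 : √(12 : ℝ) = 2 * √3 := by
    rw [show (12 : ℝ) = 2 ^ 2 * 3 by norm_num, Real.sqrt_mul (by norm_num),
      Real.sqrt_sq (by norm_num)]
  have h3 : √(3 : ℝ) ^ 2 = 3 := Real.sq_sqrt (by norm_num)
  have h3p : 0 < √(3 : ℝ) := by positivity
  have e1 : π ^ 2 / 6 / (π / √(12 * ((b : ℝ) + 1))) = π / (2 * √3) * (2 * √((b : ℝ) + 1)) := by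
    rw [Real.sqrt_mul (by norm_num), h12]
    have := Real.pi_pos
    field_simp
    linear_combination (2 : ℝ) * h3
  have e2 : ∑ k ∈ range b, π / √(12 * (((k + 1 : ℕ) : ℝ) + 1))
      = π / (2 * √3) * ∑ k ∈ range b, 1 / √((k : ℝ) + 2) := by
    rw [mul_sum]
    refine sum_congr rfl fun k _ => ?_
    rw [Real.sqrt_mul (by norm_num), h12]
    push_cast
    rw [show (k : ℝ) + 1 + 1 = k + 2 by ring]
    field_simp
  have hb1 : (1 : ℝ) ≤ b := by exact_mod_cast hb
  have hs1 : 1 ≤ √(b : ℝ) := Real.one_le_sqrt.2 hb1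
  have hsb : √((b : ℝ) + 1) ≤ √b + 1 / 2 := by
    refine Real.sqrt_le_iff.2 ⟨by positivity, ?_⟩
    nlinarith [Real.sq_sqrt (show (0 : ℝ) ≤ b by positivity)]
  have hbn' : √(b : ℝ) ≤ √n := Real.sqrt_le_sqrt (by exact_mod_cast hbn)
  rw [e1, e2, ← mul_add]
  calc π / (2 * √3) * (2 * √((b : ℝ) + 1) + ∑ k ∈ range b, 1 / √((k : ℝ) + 2))
      ≤ π / (2 * √3) * (4 * √n) := by
        gcongr
        linarith [sum_inv_sqrt_le b]
    _ = 2 * π / √3 * √n := by field_simp; ring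

theorem stmt14 (p : Bool → ℝ) (hp0 : 0 < p false) (hple : p false ≤ p true)
    (hpsum : p false + p true = 1)
    (x : ℕ → Bool) (n : ℕ) (hn : 1 ≤ n)
    (S : Finset (ℕ × ℕ)) (hS : IsPartition S n) :
    codeLen (fun k => Real.exp (-(π / Real.sqrt (12 * ((k : ℝ) + 1))))) p x 0 n -
        ∑ s ∈ S, empEnt x s.1 s.2 ≤
      (S.card : ℝ) *
        (Real.logb 2 (1 / p false) +
          (2 * π * Real.logb 2 (Real.exp 1) / Real.sqrt 3) * Real.sqrt n) := by
  let ε : ℕ → ℝ := fun k => π / √(12 * ((k : ℝ) + 1))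
  have hε : ∀ k, 0 < ε k := fun k => by positivity
  have hanti : Antitone ε := by
    intro i j hij
    simp only [ε]
    gcongr
  have hc : ∀ y, p false ≤ p y := by
    intro y; cases y
    · exact le_rfl
    · exact hple
  have hl2 : 0 < Real.log 2 := Real.log_pos one_lt_two
  rw [codeLen_partition _ p x hS, ← sum_sub_distrib, ← nsmul_eq_mul]
  refine sum_le_card_nsmul _ _ _ fun s hs => ?_
  obtain ⟨hlt, hle⟩ := hS.1 s hs
  have h1 := segment_entropy (x := x) hε hanti hp0 hc hpsum hlt
  have h2 := rate_bound (b := s.2) (by omega) hle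
  refine le_of_mul_le_mul_left (h1.trans ?_) hl2
  have e : Real.log 2 * (Real.logb 2 (1 / p false)
      + 2 * π * Real.logb 2 (Real.exp 1) / √3 * √n)
      = -Real.log (p false) + 2 * π / √3 * √n := by
    rw [Real.logb, Real.logb, Real.log_exp, one_div, Real.log_inv]
    field_simp
  rw [e]
  change π ^ 2 / 6 / ε s.2 + ∑ k ∈ range s.2, ε (k + 1) ≤ _ at h2
  linarith
end
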